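/- Let A be a Noetherian domain, let R = A[[x_1, ..., x_n]] be a power series ring over A, and let I = (x_1, ..., x_n) ⊆ R. Let M be a finitely generated R-module. Then there exists a nonzero g ∈ A such that for every commutative A-algebra L whose structure map A → L factors through A_g, and for every i ≥ 0, the natural base-change map H^i_I(M) ⊗_A L → H^i_{I·(R ⊗_A L)}(M ⊗_A L) is an isomorphism. -/

import Mathlib

open scoped TensorProduct

set_option synthInstance.maxHeartbeats 1000000
set_option maxHeartbeats 1000000

attribute [local instance] Algebra.TensorProduct.rightAlgebra

/-- The two scalar actions on `R ⊗[A] L` (of `R` on the left and of `L` on the right)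
commute. -/
noncomputable instance tensorSMulCommClass (A R L : Type) [CommRing A] [CommRing R] [CommRing L]
    [Algebra A R] [Algebra A L] : SMulCommClass R L (R ⊗[A] L) :=
  ⟨fun r l x => by
    rw [Algebra.smul_def, Algebra.smul_def, Algebra.smul_def, Algebra.smul_def, mul_left_comm]⟩

/-!
Local cohomology with support in `I` is the limit `colim Extⁱ(R ⧸ (x₁ᵏ, …, xₙᵏ), -)`. It vanishes
above degree `n`, and in degree `n` it is `M ⊗ D`, where `D = Hⁿ(R)` has the inverse monomials as an
`A`-basis; the same holds over `S = R ⊗[A] L`, so degree `n` commutes with every base change.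

For `i < n`, present `M` by `0 → X → F → M → 0` with `F` finite free. Since `Hⁱ(F) = 0`, the module
`Hⁱ(M)` is the kernel of `Hⁱ⁺¹(X) → Hⁱ⁺¹(F)`, and one descends from `i + 1` to `i`. Two things have
to be achieved by inverting some `g ≠ 0` in `A`.

* The presentation has to survive the base change as far as local cohomology can see. Generic
  freeness for the Rees module of `M` makes all the quotients `M ⧸ Iᵏ M` flat. Then every element
  of the kernel of `S ⊗[R] X → S ⊗[R] F` is fixed by an element of `I S`, so this kernel has no
  cohomology with support in `I S`.
* For `i + 1 = n`, the kernel of `X ⊗ D → F ⊗ D` has to commute with base change, which it does when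
  the image and the cokernel of this map are flat. Here `D` is the continuous dual of `R`, so the
  image and cokernel are read off from the transpose `F* → G*`, where `G` is a finite free module
  mapping onto `X`; they are controlled by Artin–Rees and by the flatness of the adic quotients of
  the kernel, image and cokernel of the transpose.
-/

section FlatAway

variable {A : Type*} [CommRing A] {M N P : Type*} [AddCommGroup M] [Module A M]
  [AddCommGroup N] [Module A N] [AddCommGroup P] [Module A P]

theorem flat_of_exact {f : M →ₗ[A] N} {q : N →ₗ[A] P} (hf : Function.Injective f)
    (hq : Function.Surjective q) (hfq : Function.Exact f q) [Module.Flat A M] [Module.Flat A P] :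
    Module.Flat A N := by
  rw [Module.Flat.iff_rTensor_injective']
  refine fun J => (injective_iff_map_eq_zero _).2 fun x hx => ?_
  have hqx : q.lTensor J x = 0 := by
    refine Module.Flat.rTensor_preserves_injective_linearMap (M := P) _ J.subtype_injective ?_
    rw [← LinearMap.comp_apply, LinearMap.rTensor_comp_lTensor, ← LinearMap.lTensor_comp_rTensor,
      LinearMap.comp_apply, hx, map_zero, map_zero]
  obtain ⟨y, rfl⟩ := (lTensor_exact J hfq hq x).1 hqx
  rw [← LinearMap.comp_apply, LinearMap.rTensor_comp_lTensor,
    ← LinearMap.lTensor_comp_rTensor] at hx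
  have hy : y = 0 := by
    refine Module.Flat.rTensor_preserves_injective_linearMap (M := M) _ J.subtype_injective ?_
    refine Module.Flat.lTensor_preserves_injective_linearMap (M := A) f hf ?_
    rw [← LinearMap.comp_apply, hx, map_zero, map_zero]
  rw [hy, map_zero]

/-- The module `M` becomes flat after inverting `g`. -/
def FlatAway (g : A) (M : Type*) [AddCommGroup M] [Module A M] : Prop :=
  Module.Flat A (LocalizedModule (Submonoid.powers g) M)

variable {g : A}

theorem FlatAway.exists_factorization (h : FlatAway g M) {l : ℕ} {f : Fin l →₀ A}
    {x : (Fin l →₀ A) →ₗ[A] M} (hxf : x f = 0) :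
    ∃ (e k : ℕ) (a : (Fin l →₀ A) →ₗ[A] Fin k →₀ A) (y : (Fin k →₀ A) →ₗ[A] M),
      g ^ e • x = y ∘ₗ a ∧ a f = 0 := by
  let ι := LocalizedModule.mkLinearMap (Submonoid.powers g) M
  have : Module.Flat A (LocalizedModule (Submonoid.powers g) M) := h
  obtain ⟨k, a, y, hay, haf⟩ :=
    Module.Flat.exists_factorization_of_apply_eq_zero_of_free (f := f) (x := ι ∘ₗ x) (by simp [hxf])
  obtain ⟨z, ⟨-, d, rfl⟩, hz⟩ :=
    Module.FinitePresentation.exists_lift_of_isLocalizedModule (Submonoid.powers g) ι y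
  obtain ⟨⟨-, e, rfl⟩, he⟩ := Module.Finite.exists_smul_of_comp_eq_of_isLocalizedModule
    (Submonoid.powers g) ι (g ^ d • x) (z ∘ₗ a) (by
      rw [← LinearMap.comp_assoc, hz, LinearMap.comp_smul, hay]; rfl)
  refine ⟨e + d, k, a, g ^ e • z, ?_, haf⟩
  rw [LinearMap.smul_comp, pow_add, mul_smul]
  exact he

theorem FlatAway.of_exists_factorization (H : ∀ {l : ℕ} {f : Fin l →₀ A}
    {x : (Fin l →₀ A) →ₗ[A] M}, x f = 0 →
      ∃ (e k : ℕ) (a : (Fin l →₀ A) →ₗ[A] Fin k →₀ A) (y : (Fin k →₀ A) →ₗ[A] M),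
        g ^ e • x = y ∘ₗ a ∧ a f = 0) :
    FlatAway g M := by
  let ι := LocalizedModule.mkLinearMap (Submonoid.powers g) M
  refine Module.Flat.of_forall_exists_factorization fun {l f x} hxf => ?_
  obtain ⟨z, ⟨-, d, rfl⟩, hz⟩ :=
    Module.FinitePresentation.exists_lift_of_isLocalizedModule (Submonoid.powers g) ι x
  obtain ⟨⟨-, e, rfl⟩, he⟩ := (IsLocalizedModule.eq_zero_iff (Submonoid.powers g) ι (m := z f)).1
    (by rw [← LinearMap.comp_apply, hz, LinearMap.smul_apply, hxf, smul_zero])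
  obtain ⟨c, k, a, y, hay, haf⟩ := H (x := g ^ e • z) he
  obtain ⟨u, hu⟩ := IsLocalizedModule.map_units ι (⟨g ^ (c + e + d), _, rfl⟩ : Submonoid.powers g)
  refine ⟨k, a, (↑u⁻¹ : Module.End A _) ∘ₗ ι ∘ₗ y, ?_, haf⟩
  have hx : (u : Module.End A _) ∘ₗ x = ι ∘ₗ y ∘ₗ a := by
    rw [hu, ← hay, LinearMap.comp_smul, LinearMap.comp_smul, hz]
    ext i
    simp only [LinearMap.comp_apply, Module.algebraMap_end_apply, LinearMap.smul_apply,
      pow_add, mul_smul]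
    rfl
  rw [LinearMap.comp_assoc, LinearMap.comp_assoc, ← hx, ← LinearMap.comp_assoc,
    ← Module.End.mul_eq_comp, Units.inv_mul, Module.End.one_eq_id, LinearMap.id_comp]

theorem FlatAway.of_exact {f : M →ₗ[A] N} {q : N →ₗ[A] P} (hf : Function.Injective f)
    (hq : Function.Surjective q) (hfq : Function.Exact f q) (hM : FlatAway g M)
    (hP : FlatAway g P) : FlatAway g N := by
  have : Module.Flat A (LocalizedModule (Submonoid.powers g) M) := hM
  have : Module.Flat A (LocalizedModule (Submonoid.powers g) P) := hP
  let S := Submonoid.powers g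
  exact flat_of_exact
    (f := IsLocalizedModule.map S (LocalizedModule.mkLinearMap S M)
      (LocalizedModule.mkLinearMap S N) f)
    (q := IsLocalizedModule.map S (LocalizedModule.mkLinearMap S N)
      (LocalizedModule.mkLinearMap S P) q)
    (IsLocalizedModule.map_injective S _ _ f hf) (IsLocalizedModule.map_surjective S _ _ q hq)
    (IsLocalizedModule.map_exact S _ _ _ f q hfq)

theorem FlatAway.of_dvd {g' : A} (h : FlatAway g M) (hg : g ∣ g') : FlatAway g' M := by
  obtain ⟨c, rfl⟩ := hg
  refine .of_exists_factorization fun hxf => ?_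
  obtain ⟨e, k, a, y, hay, haf⟩ := h.exists_factorization hxf
  exact ⟨e, k, a, c ^ e • y, by rw [mul_pow, mul_comm, mul_smul, hay, LinearMap.smul_comp], haf⟩

theorem FlatAway.of_flat [Module.Flat A M] : FlatAway g M :=
  .of_exists_factorization fun hxf => by
    obtain ⟨k, a, y, hay, haf⟩ := Module.Flat.exists_factorization_of_apply_eq_zero_of_free hxf
    exact ⟨0, k, a, y, by rw [pow_zero, one_smul, hay], haf⟩

theorem FlatAway.of_comp_eq_smul {i : M →ₗ[A] N} {r : N →ₗ[A] M} {e : ℕ}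
    (hri : r ∘ₗ i = g ^ e • LinearMap.id) (h : FlatAway g N) : FlatAway g M := by
  refine .of_exists_factorization fun {l f x} hxf => ?_
  obtain ⟨c, k, a, y, hay, haf⟩ := h.exists_factorization (x := i ∘ₗ x) (f := f) (by simp [hxf])
  refine ⟨c + e, k, a, r ∘ₗ y, ?_, haf⟩
  rw [LinearMap.comp_assoc, ← hay, LinearMap.comp_smul, ← LinearMap.comp_assoc, hri,
    LinearMap.smul_comp, LinearMap.id_comp, smul_smul, pow_add]

theorem FlatAway.of_linearEquiv (h : FlatAway g M) (e : M ≃ₗ[A] N) : FlatAway g N :=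
  h.of_comp_eq_smul (i := e.symm.toLinearMap) (r := e.toLinearMap) (e := 0) (by ext; simp)

/-- `f` becomes an isomorphism after inverting `g`. -/
def BijectiveAway (g : A) (f : M →ₗ[A] N) : Prop :=
  (∀ x, f x = 0 → ∃ e : ℕ, g ^ e • x = 0) ∧ ∀ y, ∃ (e : ℕ) (x : M), f x = g ^ e • y

theorem FlatAway.of_bijectiveAway {f : M →ₗ[A] N} (hf : BijectiveAway g f) (hN : FlatAway g N) :
    FlatAway g M := by
  let S := Submonoid.powers g
  have : Module.Flat A (LocalizedModule S N) := hN
  suffices h : Function.Bijective (LocalizedModule.map S f) from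
    Module.Flat.of_linearEquiv ((LinearEquiv.ofBijective _ h).restrictScalars A)
  refine ⟨(injective_iff_map_eq_zero _).2 fun z hz => ?_, fun z => ?_⟩
  · induction z using LocalizedModule.induction_on with | h m s
    rw [LocalizedModule.map_mk, ← LocalizedModule.zero_mk s, LocalizedModule.mk_eq] at hz
    obtain ⟨u, hu⟩ := hz
    obtain ⟨e, he⟩ := hf.1 (u • s • m) (by
      rw [LinearMap.map_smul_of_tower, LinearMap.map_smul_of_tower, hu, smul_zero, smul_zero])
    rw [← LocalizedModule.zero_mk s, LocalizedModule.mk_eq]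
    refine ⟨⟨g ^ e, e, rfl⟩ * u, ?_⟩
    rw [mul_smul, smul_zero, smul_zero]
    exact he
  · induction z using LocalizedModule.induction_on with | h y s
    obtain ⟨e, x, hx⟩ := hf.2 y
    refine ⟨LocalizedModule.mk x (⟨g ^ e, e, rfl⟩ * s), ?_⟩
    rw [LocalizedModule.map_mk, hx]
    exact LocalizedModule.mk_cancel_common_left (⟨g ^ e, e, rfl⟩ : S) s y

theorem FlatAway.of_monotone {X : ℕ → Submodule A M} (hX : Monotone X)
    (hX_top : ∀ x, ∃ k, x ∈ X k) (h : ∀ k, FlatAway g (X k)) : FlatAway g M := by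
  refine .of_exists_factorization fun {l f x} hxf => ?_
  choose d hd using fun i => hX_top (x (Finsupp.single i 1))
  have hx (v) : x v ∈ X (Finset.univ.sup d) := by
    rw [← v.univ_sum_single, map_sum]
    refine Submodule.sum_mem _ fun i _ => ?_
    rw [← mul_one (v i), ← smul_eq_mul, ← Finsupp.smul_single, map_smul]
    exact Submodule.smul_mem _ _ (hX (Finset.le_sup (Finset.mem_univ i)) (hd i))
  obtain ⟨e, k, a, y, hay, haf⟩ :=
    (h (Finset.univ.sup d)).exists_factorization (x := x.codRestrict _ hx) (f := f) (by
      ext; exact hxf)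
  refine ⟨e, k, a, Submodule.subtype _ ∘ₗ y, ?_, haf⟩
  rw [LinearMap.comp_assoc, ← hay]
  rfl

theorem lTensor_mkLinearMap_injective {L : Type*} [CommRing L] [Algebra A L]
    (hg : IsUnit (algebraMap A L g)) : Function.Injective
      ((LocalizedModule.mkLinearMap (Submonoid.powers g) M).lTensor L) := by
  have hunit (s : Submonoid.powers g) :
      IsUnit (algebraMap A (Module.End A (L ⊗[A] M)) s) := by
    obtain ⟨-, e, rfl⟩ := s
    rw [← (Algebra.lsmul A A (L ⊗[A] M) : L →ₐ[A] _).commutes, map_pow]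
    exact (hg.pow e).map _
  let ρ := (LocalizedModule.lift (Submonoid.powers g) (TensorProduct.mk A L M 1)
    hunit).liftBaseChange L
  refine Function.LeftInverse.injective (g := ρ) fun z => ?_
  induction z with
  | zero => rw [map_zero, map_zero]
  | add x y hx hy => rw [map_add, map_add, hx, hy]
  | tmul l m => simp [ρ, LocalizedModule.lift_mk, TensorProduct.smul_tmul']

theorem FlatAway.lTensor_injective {f : M →ₗ[A] N} {q : N →ₗ[A] P} (hf : Function.Injective f)
    (hq : Function.Surjective q) (hfq : Function.Exact f q) (hP : FlatAway g P)
    {L : Type*} [CommRing L] [Algebra A L] (hg : IsUnit (algebraMap A L g)) :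
    Function.Injective (f.lTensor L) := by
  let S := Submonoid.powers g
  have : Module.Flat A (LocalizedModule S P) := hP
  let fS := (LocalizedModule.map S f).restrictScalars A
  have hfS : Function.Injective (fS.lTensor L) :=
    LinearMap.lTensor_injective_of_exact_of_flat ((LocalizedModule.map S q).restrictScalars A)
      (LocalizedModule.map_surjective S q hq) fS (LocalizedModule.map_injective S f hf)
      (LocalizedModule.map_exact S f q hfq) L
  refine Function.Injective.of_comp (f := (LocalizedModule.mkLinearMap S N).lTensor L) ?_
  rw [← LinearMap.coe_comp, ← LinearMap.lTensor_comp, show LocalizedModule.mkLinearMap S N ∘ₗ f =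
    fS ∘ₗ LocalizedModule.mkLinearMap S M by ext; simp [fS], LinearMap.lTensor_comp,
    LinearMap.coe_comp]
  exact hfS.comp (lTensor_mkLinearMap_injective hg)

theorem FlatAway.lTensor_injective_and_exact {k : M →ₗ[A] N} {f : N →ₗ[A] P}
    (hk : Function.Injective k) (hkf : Function.Exact k f)
    (hrange : FlatAway g (LinearMap.range f)) (hcoker : FlatAway g (P ⧸ LinearMap.range f))
    {L : Type*} [CommRing L] [Algebra A L] (hg : IsUnit (algebraMap A L g)) :
    Function.Injective (k.lTensor L) ∧ Function.Exact (k.lTensor L) (f.lTensor L) := by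
  have hexact : Function.Exact k f.rangeRestrict := fun x => by
    rw [← hkf x, ← Subtype.val_inj]; rfl
  refine ⟨hrange.lTensor_injective hk f.surjective_rangeRestrict hexact hg, fun z => ?_⟩
  have hinj := hcoker.lTensor_injective (LinearMap.range f).injective_subtype
    (LinearMap.range f).mkQ_surjective (LinearMap.exact_subtype_mkQ _) hg
  rw [← lTensor_exact L hexact f.surjective_rangeRestrict z, ← map_eq_zero_iff _ hinj,
    ← LinearMap.comp_apply, ← LinearMap.lTensor_comp]
  rfl

theorem FlatAway.exists_section [IsNoetherianRing A] [Module.Finite A P] (hP : FlatAway g P)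
    {q : N →ₗ[A] P} (hq : Function.Surjective q) :
    ∃ (e : ℕ) (s : P →ₗ[A] N), q ∘ₗ s = g ^ e • LinearMap.id := by
  let S := Submonoid.powers g
  have : Module.Flat (Localization S) (LocalizedModule S P) :=
    (Module.flat_iff_of_isLocalization (Localization S) S _).2 hP
  have : IsNoetherianRing (Localization S) := IsLocalization.isNoetherianRing S _ ‹_›
  have : Module.FinitePresentation (Localization S) (LocalizedModule S P) :=
    Module.finitePresentation_of_finite _ _
  have : Module.Projective (Localization S) (LocalizedModule S P) :=
    Module.Flat.projective_of_finitePresentation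
  obtain ⟨σ, hσ⟩ := Module.projective_lifting_property (LocalizedModule.map S q) LinearMap.id
    (LocalizedModule.map_surjective S q hq)
  have : Module.FinitePresentation A P := Module.finitePresentation_of_finite _ _
  obtain ⟨s, ⟨-, d, rfl⟩, hs⟩ := Module.FinitePresentation.exists_lift_of_isLocalizedModule S
    (LocalizedModule.mkLinearMap S N) (σ.restrictScalars A ∘ₗ LocalizedModule.mkLinearMap S P)
  obtain ⟨⟨-, e, rfl⟩, he⟩ := Module.Finite.exists_smul_of_comp_eq_of_isLocalizedModule S
    (LocalizedModule.mkLinearMap S P) (q ∘ₗ s) (g ^ d • LinearMap.id) (by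
      ext p
      have hsp := congrArg (LocalizedModule.map S q) (LinearMap.congr_fun hs p)
      have hσp := LinearMap.congr_fun hσ (LocalizedModule.mkLinearMap S P p)
      simp only [LinearMap.comp_apply, LinearMap.smul_apply, Submonoid.smul_def,
        LinearMap.map_smul_of_tower, LinearMap.restrictScalars_apply,
        LinearMap.id_apply, LocalizedModule.mkLinearMap_apply, LocalizedModule.map_mk] at hsp hσp ⊢
      rw [hsp, hσp])
  refine ⟨e + d, g ^ e • s, ?_⟩
  rw [pow_add, mul_smul, LinearMap.comp_smul]
  exact he

theorem FlatAway.exists_extend [IsNoetherianRing A] [Module.Finite A P] (hP : FlatAway g P)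
    {f : M →ₗ[A] N} {q : N →ₗ[A] P} (hf : Function.Injective f)
    (hq : Function.Surjective q) (hfq : Function.Exact f q) (φ : M →ₗ[A] A) :
    ∃ (e : ℕ) (φ' : N →ₗ[A] A), φ' ∘ₗ f = g ^ e • φ := by
  obtain ⟨e, s, hs⟩ := hP.exists_section hq
  have hker (y : N) :
      (g ^ e • LinearMap.id - s ∘ₗ q : N →ₗ[A] N) y ∈ LinearMap.range f := by
    rw [LinearMap.mem_range, ← Set.mem_range, ← hfq]
    simpa [sub_eq_zero] using (LinearMap.congr_fun hs (q y)).symm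
  refine ⟨e, φ ∘ₗ (LinearEquiv.ofInjective f hf).symm.toLinearMap ∘ₗ
    LinearMap.codRestrict _ (g ^ e • LinearMap.id - s ∘ₗ q) hker, LinearMap.ext fun x => ?_⟩
  have : LinearMap.codRestrict _ (g ^ e • LinearMap.id - s ∘ₗ q) hker (f x) =
      LinearEquiv.ofInjective f hf (g ^ e • x) := by
    ext
    simp [hfq.apply_apply_eq_zero]
  simp only [LinearMap.comp_apply, this, LinearEquiv.coe_coe, LinearEquiv.symm_apply_apply,
    map_smul, LinearMap.smul_apply]

theorem FlatAway.dual [IsNoetherianRing A] [Module.Finite A M] (hM : FlatAway g M) :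
    FlatAway g (M →ₗ[A] A) := by
  obtain ⟨m, q, hq⟩ := Module.Finite.exists_fin' A M
  obtain ⟨e, s, hs⟩ := hM.exists_section hq
  refine .of_comp_eq_smul (N := (Fin m → A) →ₗ[A] A) (i := LinearMap.lcomp A A q)
    (r := LinearMap.lcomp A A s) (e := e) ?_ .of_flat
  ext φ x
  simpa using congrArg φ (LinearMap.congr_fun hs x)

theorem exists_flatAway_of_finite [IsDomain A] [IsNoetherianRing A] [Module.Finite A M] :
    ∃ g : A, g ≠ 0 ∧ FlatAway g M := by
  let S := nonZeroDivisors A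
  have : Module.FinitePresentation A M := Module.finitePresentation_of_finite _ _
  let _ : Field (Localization S) := inferInstanceAs (Field (FractionRing A))
  obtain ⟨g, hg, hfree, -⟩ := Module.FinitePresentation.exists_free_localizedModule_powers S
    (LocalizedModule.mkLinearMap S M) (Localization S)
  exact ⟨g, nonZeroDivisors.ne_zero hg,
    (Module.flat_iff_of_isLocalization (Localization (Submonoid.powers g)) (.powers g) _).1
      inferInstance⟩

end FlatAway

section GenericFlatness

universe u

open Polynomial Pointwise

variable {A : Type*} [CommRing A] {B : Type*} [CommRing B] [Algebra A B]

/-- Every finite `B`-module becomes flat over `A` after inverting a nonzero element of `A`. -/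
def HasGenericFlatness (A B : Type*) [CommRing A] [CommRing B] [Algebra A B] : Prop :=
  ∀ (M : Type u) [AddCommGroup M] [Module A M] [Module B M] [IsScalarTower A B M]
    [Module.Finite B M], ∃ g : A, g ≠ 0 ∧ FlatAway g M

section Endomorphism

variable {M X : Type*} [AddCommGroup M] [Module A M] [Module B M] [IsScalarTower A B M]
  [AddCommGroup X] [Module A X] [Module B X] [IsScalarTower A B X] {g : A}

theorem FlatAway.sup_range {P : Submodule B M} (hP : FlatAway g P) (f : X →ₗ[B] M)
    (hf : FlatAway g (X ⧸ P.comap f)) : FlatAway g ↥(P ⊔ LinearMap.range f) := by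
  let Q : Submodule B ↥(P ⊔ LinearMap.range f) := P.comap (P ⊔ LinearMap.range f).subtype
  let ψ : X →ₗ[B] ↥(P ⊔ LinearMap.range f) ⧸ Q :=
    Q.mkQ ∘ₗ f.codRestrict _ fun x => Submodule.mem_sup_right ⟨x, rfl⟩
  have hker : LinearMap.ker ψ = P.comap f := by ext x; simp [ψ, Q]
  have hψ : Function.Surjective ψ := by
    rw [← LinearMap.range_eq_top, eq_top_iff]
    rintro ⟨y, hy⟩ -
    obtain ⟨p, hp, -, ⟨x, rfl⟩, rfl⟩ := Submodule.mem_sup.1 hy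
    exact ⟨x, (Submodule.Quotient.eq _).2 (by simpa [Q] using hp)⟩
  have hle : P ≤ P ⊔ LinearMap.range f := le_sup_left
  have hexact : Function.Exact (Submodule.inclusion hle) Q.mkQ := by
    refine LinearMap.exact_iff.2 (Submodule.ext fun y => ?_)
    rw [Submodule.ker_mkQ, Submodule.range_inclusion]
  exact .of_exact (f := (Submodule.inclusion hle).restrictScalars A)
    (q := Q.mkQ.restrictScalars A) (Submodule.inclusion_injective hle) Q.mkQ_surjective hexact hP
    (hf.of_linearEquiv ((Submodule.quotEquivOfEq _ _ hker.symm ≪≫ₗ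
      ψ.quotKerEquivOfSurjective hψ).restrictScalars A))

/-- The submodules `N + φ N + ⋯ + φ ^ j N`. -/
def orbitSpan (φ : Module.End B M) (N : Submodule B M) : ℕ →o Submodule B M :=
  partialSups fun i => N.map (φ ^ i)

theorem orbitSpan_succ (φ : Module.End B M) (N : Submodule B M) (j : ℕ) :
    orbitSpan φ N (j + 1) = orbitSpan φ N j ⊔ N.map (φ ^ (j + 1)) :=
  partialSups_succ _ j

theorem map_orbitSpan_le (φ : Module.End B M) (N : Submodule B M) (j : ℕ) :
    (orbitSpan φ N j).map φ ≤ orbitSpan φ N (j + 1) := by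
  rw [Submodule.map_le_iff_le_comap]
  refine partialSups_le _ _ _ fun i hi => ?_
  rw [← Submodule.map_le_iff_le_comap, ← Submodule.map_comp, ← Module.End.mul_eq_comp,
    ← pow_succ']
  exact le_partialSups_of_le (fun i => N.map (φ ^ i)) (Nat.succ_le_succ hi)

/-- The elements of `N` that `φ ^ (j + 1)` carries into `N + φ N + ⋯ + φ ^ j N`. -/
def successorRelations (φ : Module.End B M) (N : Submodule B M) : ℕ →o Submodule B N where
  toFun j := (orbitSpan φ N j).comap ((φ ^ (j + 1)).domRestrict N)
  monotone' := monotone_nat_of_le_succ fun j x hx => by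
    have hφx := map_orbitSpan_le φ N j (Submodule.mem_map_of_mem hx)
    rw [LinearMap.domRestrict_apply, ← Module.End.mul_apply, ← pow_succ'] at hφx
    exact hφx

theorem flatAway_of_successorRelations {φ : Module.End B M} {N : Submodule B M}
    (hN : ⨆ i, N.map (φ ^ i) = ⊤) (h₀ : FlatAway g N)
    (h : ∀ j, FlatAway g (N ⧸ successorRelations φ N j)) : FlatAway g M := by
  have hsup (j : ℕ) : FlatAway g (orbitSpan φ N j) := by
    induction j with
    | zero =>
      rwa [orbitSpan, partialSups_zero, pow_zero, Module.End.one_eq_id, Submodule.map_id]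
    | succ j ih =>
      rw [orbitSpan_succ, ← LinearMap.range_domRestrict]
      exact ih.sup_range _ (h j)
  refine .of_monotone (X := fun j => (orbitSpan φ N j).restrictScalars A)
    (fun i j hij => (orbitSpan φ N).monotone hij) (fun x => ?_) hsup
  have hx : x ∈ ⨆ i, orbitSpan φ N i := by
    rw [orbitSpan, iSup_partialSups_eq, hN]
    trivial
  exact (Submodule.mem_iSup_of_directed _ (orbitSpan φ N).monotone.directed_le).1 hx

end Endomorphism

theorem HasGenericFlatness.of_surjective {B' : Type*} [CommRing B'] [Algebra A B']
    (hB : HasGenericFlatness.{u} A B) (f : B →ₐ[A] B') (hf : Function.Surjective f) :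
    HasGenericFlatness.{u} A B' := by
  intro M _ _ _ _ _
  let _ : Module B M := Module.compHom M f.toRingHom
  have : IsScalarTower A B M := ⟨fun a b m => by
    change f (a • b) • m = a • f b • m
    rw [map_smul, smul_assoc]⟩
  let _ : Module B B' := Module.compHom B' f.toRingHom
  have : IsScalarTower B B' M := ⟨fun b c m => mul_smul (f b) c m⟩
  have : Module.Finite B B' := .of_surjective (LinearMap.toSpanSingleton B B' 1) fun c => by
    obtain ⟨b, rfl⟩ := hf c
    exact ⟨b, mul_one (f b)⟩
  have : Module.Finite B M := .trans B' M
  exact hB M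

variable [IsDomain A]

theorem HasGenericFlatness.exists_flatAway_of_endomorphism [IsNoetherianRing B]
    (hB : HasGenericFlatness.{u} A B) {M : Type u} [AddCommGroup M] [Module A M] [Module B M]
    [IsScalarTower A B M] (φ : Module.End B M) {N : Submodule B M} (hfg : N.FG)
    (hN : ⨆ i, N.map (φ ^ i) = ⊤) : ∃ g : A, g ≠ 0 ∧ FlatAway g M := by
  have : Module.Finite B N := .of_fg hfg
  obtain ⟨k, hk⟩ := monotone_stabilizes_iff_noetherian.2
    (inferInstance : IsNoetherian B N) (successorRelations φ N)
  obtain ⟨g₀, hg₀, h₀⟩ := hB N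
  choose g hg h using fun j => hB (N ⧸ successorRelations φ N j)
  refine ⟨g₀ * ∏ j ∈ Finset.range (k + 1), g j,
    mul_ne_zero hg₀ (Finset.prod_ne_zero_iff.2 fun j _ => hg j),
    flatAway_of_successorRelations hN (h₀.of_dvd (Dvd.intro _ rfl)) fun j => ?_⟩
  have hdvd {i : ℕ} (hi : i ≤ k) : g i ∣ g₀ * ∏ j ∈ Finset.range (k + 1), g j :=
    (Finset.dvd_prod_of_mem g (by simpa using Nat.lt_succ_of_le hi)).mul_left _
  obtain hj | hj := le_total j k
  · exact (h j).of_dvd (hdvd hj)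
  · rw [← hk j hj]
    exact (h k).of_dvd (hdvd le_rfl)

theorem HasGenericFlatness.polynomial [IsNoetherianRing B] (hB : HasGenericFlatness.{u} A B) :
    HasGenericFlatness.{u} A B[X] := by
  intro M _ _ _ _ _
  let _ : Module B M := Module.compHom M (C : B →+* B[X])
  have : IsScalarTower A B M := ⟨fun a b m => by
    change C (a • b) • m = a • C b • m
    rw [← smul_C, smul_assoc]⟩
  have : IsScalarTower B B[X] M := ⟨fun b p m => by
    rw [Polynomial.smul_eq_C_mul, mul_smul]
    rfl⟩
  obtain ⟨s, hs⟩ := Module.Finite.fg_top (R := B[X]) (M := M)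
  let φ : Module.End B M := Algebra.lsmul B B M (X : B[X])
  refine hB.exists_flatAway_of_endomorphism φ (Submodule.fg_span s.finite_toSet)
    (eq_top_iff.2 fun x _ => ?_)
  have hx : x ∈ Submodule.span B (Set.range (basisMonomials B) • (s : Set M)) := by
    rw [Submodule.span_smul_of_span_eq_top (basisMonomials B).span_eq, hs]
    trivial
  refine Submodule.span_le.2 ?_ hx
  rintro - ⟨-, ⟨i, rfl⟩, m, hm, rfl⟩
  refine Submodule.mem_iSup_of_mem i ⟨m, Submodule.subset_span hm, ?_⟩
  simp only [φ, ← map_pow, coe_basisMonomials, monomial_one_right_eq_X_pow]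
  rfl

theorem hasGenericFlatness_of_finite [IsNoetherianRing A] [Module.Finite A B] :
    HasGenericFlatness.{u} A B := by
  intro M _ _ _ _ _
  have : Module.Finite A M := .trans B M
  exact exists_flatAway_of_finite

theorem hasGenericFlatness_mvPolynomial [IsNoetherianRing A] (n : ℕ) :
    HasGenericFlatness.{u} A (MvPolynomial (Fin n) A) := by
  induction n with
  | zero =>
    have : Module.Finite A (MvPolynomial (Fin 0) A) :=
      .equiv (MvPolynomial.isEmptyAlgEquiv A (Fin 0)).symm.toLinearEquiv
    exact hasGenericFlatness_of_finite
  | succ n ih =>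
    let e := (MvPolynomial.finSuccEquiv A n).symm
    exact ih.polynomial.of_surjective (e : _ →ₐ[A] _) e.surjective

theorem hasGenericFlatness_of_finiteType [IsNoetherianRing A] [Algebra.FiniteType A B] :
    HasGenericFlatness.{u} A B := by
  obtain ⟨n, f, hf⟩ := Algebra.FiniteType.iff_quotient_mvPolynomial''.1
    (inferInstance : Algebra.FiniteType A B)
  exact (hasGenericFlatness_mvPolynomial n).of_surjective f hf

end GenericFlatness

section AdicQuotients

universe u

variable {A : Type*} [CommRing A]

theorem HasGenericFlatness.exists_flatAway_of_factor {B : Type*} [CommRing B] [Algebra A B]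
    {J : Ideal B} (hJ : HasGenericFlatness.{u} A (B ⧸ J)) (W : Type u) [AddCommGroup W]
    [Module A W] [Module B W] [IsScalarTower A B W] [Module.Finite B W] :
    ∃ g : A, g ≠ 0 ∧ ∀ {P N : Type u} [AddCommGroup P] [Module A P] [AddCommGroup N] [Module A N]
      (i : P →ₗ[A] W) (r : W →ₗ[A] N), (J • (⊤ : Submodule B W)).restrictScalars A ≤
        LinearMap.ker r → Function.Surjective (r ∘ₗ i) →
      (∀ x, r (i x) = 0 → i x ∈ J • (⊤ : Submodule B W)) → FlatAway g N := by
  obtain ⟨g, hg, h⟩ := hJ (W ⧸ J • (⊤ : Submodule B W))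
  refine ⟨g, hg, fun {P N} _ _ _ _ i r hr hsurj hker => ?_⟩
  let q := (J • (⊤ : Submodule B W)).mkQ.restrictScalars A
  let s : N →ₗ[A] W ⧸ J • (⊤ : Submodule B W) :=
    (LinearMap.ker (r ∘ₗ i)).liftQ (q ∘ₗ i) (fun x hx => by simpa [q] using hker x hx) ∘ₗ
      ((r ∘ₗ i).quotKerEquivOfSurjective hsurj).symm.toLinearMap
  have hs (x : P) : s (r (i x)) = q (i x) := by
    have : ((r ∘ₗ i).quotKerEquivOfSurjective hsurj).symm (r (i x)) =
        (LinearMap.ker (r ∘ₗ i)).mkQ x := by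
      rw [LinearEquiv.symm_apply_eq]
      rfl
    simp [s, this]
  let t : W ⧸ J • (⊤ : Submodule B W) →ₗ[A] N :=
    ((J • (⊤ : Submodule B W)).restrictScalars A).liftQ r hr ∘ₗ
      (Submodule.Quotient.restrictScalarsEquiv A (J • (⊤ : Submodule B W))).symm.toLinearMap
  refine FlatAway.of_comp_eq_smul (i := s) (r := t) (e := 0) (LinearMap.ext fun y => ?_) h
  obtain ⟨x, rfl⟩ := hsurj y
  change t (s (r (i x))) = g ^ 0 • r (i x)
  rw [hs, pow_zero, one_smul]
  rfl

variable {R : Type u} [CommRing R] [Algebra A R] (I : Ideal R)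
  {M : Type u} [AddCommGroup M] [Module A M] [Module R M] [IsScalarTower A R M] {g : A}

instance finiteType_quotient_map_reesAlgebra [IsNoetherianRing R] [Module.Finite A (R ⧸ I)] :
    Algebra.FiniteType A (reesAlgebra I ⧸ I.map (algebraMap R (reesAlgebra I))) := by
  have : Algebra.FiniteType R (reesAlgebra I ⧸ I.map (algebraMap R (reesAlgebra I))) :=
    .trans (S := reesAlgebra I) inferInstance inferInstance
  have : IsScalarTower A (R ⧸ I) (reesAlgebra I ⧸ I.map (algebraMap R (reesAlgebra I))) :=
    .of_algebraMap_eq fun a => rfl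
  exact .trans (S := R ⧸ I) inferInstance
    (.of_restrictScalars_finiteType R (R ⧸ I) _)

variable (M) in
/-- The Rees module `⨁ Iᵏ M`. -/
noncomputable abbrev reesModule : Submodule (reesAlgebra I) (PolynomialModule R M) :=
  (I.stableFiltration (⊤ : Submodule R M)).submodule

instance finite_reesModule [IsNoetherianRing R] [Module.Finite R M] :
    Module.Finite (reesAlgebra I) (reesModule I M) :=
  .of_fg <| (Ideal.Filtration.submodule_fg_iff_stable _ fun _ => IsNoetherian.noetherian _).2
    (I.stableFiltration_stable ⊤)

theorem mem_map_reesAlgebra_smul_top {w : reesModule I M} :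
    w ∈ I.map (algebraMap R (reesAlgebra I)) • (⊤ : Submodule (reesAlgebra I) (reesModule I M)) ↔
      w ∈ I • (⊤ : Submodule R (reesModule I M)) := by
  rw [← Submodule.restrictScalars_mem R, Ideal.smul_restrictScalars, Submodule.restrictScalars_top]

/-- The inclusion of `Iᵏ M` as the component of degree `k` of the Rees module. -/
noncomputable def reesModuleSingle (k : ℕ) : ↥(I ^ k • (⊤ : Submodule R M)) →ₗ[R] reesModule I M :=
  ((PolynomialModule.lsingle R k).domRestrict _).codRestrict
    ((reesModule I M).restrictScalars R) fun x j => by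
    change Finsupp.single k (x : M) j ∈ _
    rw [Finsupp.single_apply]
    split_ifs with h
    · exact h ▸ x.2
    · exact zero_mem _

/-- The component of degree `k` of the Rees module, modulo `Iᵏ⁺¹ M`. -/
noncomputable def reesModuleCoeff (k : ℕ) : reesModule I M →ₗ[R]
    ↥((I ^ k • (⊤ : Submodule R M)).map (I ^ (k + 1) • (⊤ : Submodule R M)).mkQ) where
  toFun w := ⟨_, Submodule.mem_map_of_mem (w.2 k)⟩
  map_add' _ _ := rfl
  map_smul' _ _ := rfl

theorem smul_top_le_ker_reesModuleCoeff (k : ℕ) :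
    I • (⊤ : Submodule R (reesModule I M)) ≤ LinearMap.ker (reesModuleCoeff I (M := M) k) := by
  refine Submodule.smul_le.2 fun x hx w _ => ?_
  refine Subtype.ext ((Submodule.Quotient.mk_eq_zero _).2 ?_)
  rw [pow_succ', Submodule.mul_smul]
  exact Submodule.smul_mem_smul hx (w.2 k)

theorem reesModuleSingle_mem_smul_top {k : ℕ} {x : ↥(I ^ k • (⊤ : Submodule R M))}
    (hx : x.1 ∈ I ^ (k + 1) • (⊤ : Submodule R M)) :
    reesModuleSingle I k x ∈ I • (⊤ : Submodule R (reesModule I M)) := by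
  have hx' : x ∈ I • (⊤ : Submodule R ↥(I ^ k • (⊤ : Submodule R M))) := by
    obtain ⟨y, hy, hyx⟩ :
        x.1 ∈ (I • (⊤ : Submodule R ↥(I ^ k • (⊤ : Submodule R M)))).map (Submodule.subtype _) := by
      rwa [Submodule.map_smul'', Submodule.map_subtype_top, ← Submodule.mul_smul, ← pow_succ']
    rwa [← Subtype.ext hyx]
  have hmap := Submodule.mem_map_of_mem (f := reesModuleSingle I k) hx'
  rw [Submodule.map_smul''] at hmap
  exact Submodule.smul_mono le_rfl le_top hmap

theorem reesModuleCoeff_reesModuleSingle (k : ℕ) (x : ↥(I ^ k • (⊤ : Submodule R M))) :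
    (reesModuleCoeff I k (reesModuleSingle I k x)).1 =
      (I ^ (k + 1) • (⊤ : Submodule R M)).mkQ x := by
  change (I ^ (k + 1) • (⊤ : Submodule R M)).mkQ (Finsupp.single k (x : M) k) = _
  rw [Finsupp.single_eq_same]

theorem exists_flatAway_map_mkQ [IsDomain A] [IsNoetherianRing A] [IsNoetherianRing R]
    [Module.Finite A (R ⧸ I)] [Module.Finite R M] :
    ∃ g : A, g ≠ 0 ∧ ∀ k,
      FlatAway g ↥((I ^ k • (⊤ : Submodule R M)).map (I ^ (k + 1) • (⊤ : Submodule R M)).mkQ) := by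
  obtain ⟨g, hg, h⟩ := HasGenericFlatness.exists_flatAway_of_factor
    (hasGenericFlatness_of_finiteType (A := A)
      (B := reesAlgebra I ⧸ I.map (algebraMap R (reesAlgebra I)))) (reesModule I M)
  refine ⟨g, hg, fun k => h ((reesModuleSingle I k).restrictScalars A)
    ((reesModuleCoeff I k).restrictScalars A) ?_ ?_ ?_⟩
  · exact fun w hw => smul_top_le_ker_reesModuleCoeff I k ((mem_map_reesAlgebra_smul_top I).1 hw)
  · rintro ⟨-, x, hx, rfl⟩
    exact ⟨⟨x, hx⟩, Subtype.ext (reesModuleCoeff_reesModuleSingle I k _)⟩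
  · intro x hx
    refine (mem_map_reesAlgebra_smul_top I).2 (reesModuleSingle_mem_smul_top I ?_)
    rw [← Submodule.ker_mkQ (I ^ (k + 1) • _), LinearMap.mem_ker,
      ← reesModuleCoeff_reesModuleSingle]
    exact congrArg Subtype.val hx

theorem finite_quotient_pow [IsNoetherianRing R] [Module.Finite A (R ⧸ I)] (k : ℕ) :
    Module.Finite A (R ⧸ I ^ k) := by
  obtain rfl | hk := eq_or_ne k 0
  · rw [pow_zero, Ideal.one_eq_top]
    infer_instance
  let f : R ⧸ I ^ k →ₐ[A] R ⧸ I := Ideal.Quotient.factorₐ A (Ideal.pow_le_self hk)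
  refine Module.finite_of_surjective_of_ker_le_nilradical f
    (Ideal.Quotient.factor_surjective (Ideal.pow_le_self hk)) (fun x hx => ⟨k, ?_⟩)
    (IsNoetherian.noetherian _)
  obtain ⟨y, rfl⟩ := Ideal.Quotient.mk_surjective x
  rw [← map_pow]
  refine Ideal.Quotient.eq_zero_iff_mem.2 ?_
  exact Ideal.pow_mem_pow (Ideal.Quotient.eq_zero_iff_mem.1 hx) k

variable (M) in
theorem finite_quotient_pow_smul_top [IsNoetherianRing R] [Module.Finite A (R ⧸ I)]
    [Module.Finite R M] (k : ℕ) : Module.Finite A (M ⧸ I ^ k • (⊤ : Submodule R M)) :=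
  have := finite_quotient_pow (A := A) I k
  have : IsScalarTower A (R ⧸ I ^ k) (M ⧸ I ^ k • (⊤ : Submodule R M)) := inferInstance
  .trans (R ⧸ I ^ k) _

/-- All the quotients `M ⧸ Iᵏ M` become flat over `A` after inverting `g`. -/
def AdicallyFlatAway (g : A) (I : Ideal R) (M : Type*) [AddCommGroup M] [Module A M] [Module R M]
    [IsScalarTower A R M] : Prop :=
  ∀ k, FlatAway g (M ⧸ I ^ k • (⊤ : Submodule R M))

variable {I} in
theorem AdicallyFlatAway.of_dvd {g' : A} (h : AdicallyFlatAway g I M) (hg : g ∣ g') :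
    AdicallyFlatAway g' I M :=
  fun k => (h k).of_dvd hg

variable (M) in
theorem exists_adicallyFlatAway [IsDomain A] [IsNoetherianRing A] [IsNoetherianRing R]
    [Module.Finite A (R ⧸ I)] [Module.Finite R M] :
    ∃ g : A, g ≠ 0 ∧ AdicallyFlatAway g I M := by
  obtain ⟨g, hg, h⟩ := exists_flatAway_map_mkQ (A := A) I (M := M)
  refine ⟨g, hg, fun k => ?_⟩
  induction k with
  | zero =>
    have := (Submodule.Quotient.subsingleton_iff (p := I ^ 0 • (⊤ : Submodule R M))).2 (by simp)
    exact .of_flat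
  | succ k ih =>
    let f := ((I ^ k • (⊤ : Submodule R M)).map (I ^ (k + 1) • (⊤ : Submodule R M)).mkQ).subtype
    let q : (M ⧸ I ^ (k + 1) • (⊤ : Submodule R M)) →ₗ[R] M ⧸ I ^ k • (⊤ : Submodule R M) :=
      Submodule.factorPowSucc I M k
    have hfq : Function.Exact f q := by
      refine LinearMap.exact_iff.2 ?_
      rw [Submodule.range_subtype]
      exact (Submodule.ker_mapQ _ _ _ _).trans (by rw [Submodule.comap_id])
    have hq : Function.Surjective q :=
      Submodule.factor_surjective (Submodule.pow_smul_top_le I M k.le_succ)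
    exact .of_exact (f := f.restrictScalars A) (q := q.restrictScalars A)
      (Submodule.subtype_injective _) hq hfq (h k) ih

end AdicQuotients

section LocalFlatness

open TensorProduct.AlgebraTensorModule

variable {A : Type*} [CommRing A] {R : Type*} [CommRing R] [Algebra A R]
  {M N P : Type*} [AddCommGroup M] [Module A M] [Module R M] [IsScalarTower A R M]
  [AddCommGroup N] [Module A N] [Module R N] [IsScalarTower A R N]
  [AddCommGroup P] [Module A P] [Module R P] [IsScalarTower A R P]
  {L : Type*} [AddCommGroup L] [Module A L]

theorem flat_localizedModule {T : Submonoid R} (h : ∀ (a : Ideal A) (z : M ⊗[A] a),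
    a.subtype.lTensor M z = 0 → ∃ t ∈ T, t • z = 0) : Module.Flat A (LocalizedModule T M) := by
  rw [Module.Flat.iff_lTensor_injective']
  intro a
  rw [injective_iff_map_eq_zero]
  intro y hy
  let mk := LocalizedModule.mkLinearMap T M
  obtain ⟨⟨z, s⟩, hz⟩ : ∃ x : (M ⊗[A] a) × T, x.2 • y = rTensor A a mk x.1 :=
    IsLocalizedModule.surj T (rTensor A a mk) y
  have hz0 : rTensor A A mk (lTensor R M a.subtype z) = 0 := by
    have : lTensor R (LocalizedModule T M) a.subtype (rTensor A a mk z) =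
        rTensor A A mk (lTensor R M a.subtype z) := by
      rw [← IsLocalizedModule.map_lTensor _ T a.subtype mk, IsLocalizedModule.map_apply]
    rw [← this, ← hz, Submonoid.smul_def, map_smul]
    exact (congrArg _ hy).trans (smul_zero _)
  obtain ⟨t, ht⟩ := (IsLocalizedModule.eq_zero_iff T (rTensor A A mk)).1 hz0
  obtain ⟨t', ht', htz⟩ := h a (t.1 • z) (by
    rw [Submonoid.smul_def, ← map_smul] at ht
    exact ht)
  have : IsLocalizedModule T (rTensor A a mk) := inferInstance
  apply IsLocalizedModule.smul_injective (rTensor A a mk) (⟨t', ht'⟩ * t * s)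
  simp only [mul_smul, hz, smul_zero]
  simp only [Submonoid.smul_def, ← map_smul, htz, map_zero]

theorem exists_smul_eq_zero_of_flat_localizedModule (T : Submonoid R) {f : M →ₗ[R] N}
    {q : N →ₗ[R] P} (hf : Function.Injective f) (hq : Function.Surjective q)
    (hfq : Function.Exact f q) [Module.Flat A (LocalizedModule T P)] {z : M ⊗[A] L}
    (hz : (f.restrictScalars A).rTensor L z = 0) : ∃ t ∈ T, t • z = 0 := by
  let mkM := LocalizedModule.mkLinearMap T M
  let mkN := LocalizedModule.mkLinearMap T N
  let fT := (LocalizedModule.map T f).restrictScalars A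
  have hfT : Function.Injective (fT.rTensor L) :=
    (fT.lTensor_inj_iff_rTensor_inj L).1 <|
      LinearMap.lTensor_injective_of_exact_of_flat ((LocalizedModule.map T q).restrictScalars A)
        (LocalizedModule.map_surjective T q hq) fT (LocalizedModule.map_injective T f hf)
        (LocalizedModule.map_exact T f q hfq) L
  have hcomm : fT ∘ₗ mkM.restrictScalars A = mkN.restrictScalars A ∘ₗ f.restrictScalars A := by
    ext; simp [fT, mkM, mkN]
  have hmk : rTensor A L mkM z = 0 := by
    apply hfT
    change (fT.rTensor L ∘ₗ (mkM.restrictScalars A).rTensor L) z = _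
    rw [← LinearMap.rTensor_comp, hcomm, LinearMap.rTensor_comp, LinearMap.comp_apply, hz,
      map_zero, map_zero]
  obtain ⟨t, ht⟩ := (IsLocalizedModule.eq_zero_iff T (rTensor A L mkM)).1 hmk
  exact ⟨t, t.2, ht⟩

theorem FlatAway.exists_smul_eq_zero {g : A} (h : FlatAway g M) {f : N →ₗ[A] P}
    (hf : Function.Injective f) {z : M ⊗[A] N} (hz : f.lTensor M z = 0) :
    ∃ e, g ^ e • z = 0 := by
  have : Module.Flat A (LocalizedModule (Submonoid.powers g) M) := h
  let mk := LocalizedModule.mkLinearMap (Submonoid.powers g) M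
  have hmk : rTensor A N mk z = 0 := by
    apply Module.Flat.lTensor_preserves_injective_linearMap f hf
    change (f.lTensor _ ∘ₗ mk.rTensor N) z = _
    rw [LinearMap.lTensor_comp_rTensor, ← LinearMap.rTensor_comp_lTensor, LinearMap.comp_apply,
      hz, map_zero, map_zero]
  obtain ⟨⟨-, e, rfl⟩, he⟩ :=
    (IsLocalizedModule.eq_zero_iff (Submonoid.powers g) (rTensor A N mk)).1 hmk
  exact ⟨e, he⟩

theorem mem_smul_top_of_rTensor_mkQ_eq_zero {J : Ideal R} {z : M ⊗[A] L}
    (hz : ((J • (⊤ : Submodule R M)).mkQ.restrictScalars A).rTensor L z = 0) :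
    z ∈ J • (⊤ : Submodule R (M ⊗[A] L)) := by
  have hexact : Function.Exact ((J • (⊤ : Submodule R M)).subtype.restrictScalars A)
      ((J • (⊤ : Submodule R M)).mkQ.restrictScalars A) := LinearMap.exact_subtype_mkQ _
  have hsurj : Function.Surjective (J • (⊤ : Submodule R M)).mkQ := Submodule.mkQ_surjective _
  obtain ⟨w, rfl⟩ := (rTensor_exact L hexact hsurj z).1 hz
  clear hz
  induction w with
  | zero => simp
  | add x y hx hy => rw [map_add]; exact add_mem hx hy
  | tmul x l =>
    exact Submodule.smul_comap_le_comap_smul ((mk A R M L).flip l) ⊤ J x.2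

theorem exists_pow_smul_eq_smul_of_isLocalizedModule [IsNoetherianRing R] [Module.Finite R M]
    {I : Ideal R} {γ : R} {z : M} (h : ∀ k, ∃ e, γ ^ e • z ∈ I ^ k • (⊤ : Submodule R M))
    {R' : Type*} [CommRing R'] [Algebra R R'] [IsLocalization.Away γ R']
    {M' : Type*} [AddCommGroup M'] [Module R M'] [Module R' M'] [IsScalarTower R R' M']
    (f : M →ₗ[R] M') [IsLocalizedModule (Submonoid.powers γ) f] :
    ∃ e, ∃ r ∈ I, γ ^ e • z = r • z := by
  have : IsNoetherianRing R' := IsLocalization.isNoetherianRing (Submonoid.powers γ) R' ‹_›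
  have : Module.Finite R' M' := .of_isLocalizedModule (Submonoid.powers γ) f
  let J := I.map (algebraMap R R')
  have hmem : f z ∈ (⨅ k : ℕ, J ^ k • ⊤ : Submodule R' M') := by
    refine (Submodule.mem_iInf _).2 fun k => ?_
    obtain ⟨e, he⟩ := h k
    have hle (x : M) (hx : x ∈ I ^ k • (⊤ : Submodule R M)) :
        f x ∈ J ^ k • (⊤ : Submodule R' M') := by
      induction hx using Submodule.smul_induction_on' with
      | smul r hr y _ =>
        rw [f.map_smul, ← algebraMap_smul R' r (f y), ← Ideal.map_pow]
        exact Submodule.smul_mem_smul (Ideal.mem_map_of_mem _ hr) Submodule.mem_top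
      | add x _ y _ hx hy => rw [f.map_add]; exact add_mem hx hy
    have hunit : IsUnit (algebraMap R R' (γ ^ e)) :=
      IsLocalization.map_units _ (⟨γ ^ e, e, rfl⟩ : Submonoid.powers γ)
    rw [← Submodule.smul_mem_iff_of_isUnit _ hunit, algebraMap_smul, ← f.map_smul]
    exact hle _ he
  obtain ⟨⟨r, hr⟩, hrz⟩ := (Ideal.mem_iInf_smul_pow_eq_bot_iff J (f z)).1 hmem
  obtain ⟨⟨⟨i, hi⟩, ⟨-, b, rfl⟩⟩, hib⟩ :=
    (IsLocalization.mem_map_algebraMap_iff (Submonoid.powers γ) _).1 hr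
  have hf : f (γ ^ b • z) = f (i • z) := by
    rw [f.map_smul, f.map_smul, ← algebraMap_smul R' i, ← hib, mul_comm, mul_smul, hrz,
      algebraMap_smul]
  obtain ⟨⟨-, a, rfl⟩, ha⟩ := (IsLocalizedModule.eq_iff_exists (Submonoid.powers γ) f).1 hf
  exact ⟨a + b, γ ^ a * i, I.mul_mem_left _ hi, by rw [pow_add, mul_smul, mul_smul]; exact ha⟩

theorem exists_pow_smul_eq_smul [IsNoetherianRing R] [Module.Finite R M]
    {I : Ideal R} {γ : R} {z : M} (h : ∀ k, ∃ e, γ ^ e • z ∈ I ^ k • (⊤ : Submodule R M)) :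
    ∃ e, ∃ r ∈ I, γ ^ e • z = r • z :=
  exists_pow_smul_eq_smul_of_isLocalizedModule h
    (R' := Localization (Submonoid.powers γ)) (LocalizedModule.mkLinearMap (Submonoid.powers γ) M)

theorem finite_tensorProduct_of_isScalarTower [Module.Finite R M] [Module.Finite A L] :
    Module.Finite R (M ⊗[A] L) :=
  .equiv (cancelBaseChange A R R M L)

/-- The multiplicative set of elements of `R` congruent to a power of `γ` modulo `I`. -/
def powersMod (I : Ideal R) (γ : R) : Submonoid R :=
  (Submonoid.powers (Ideal.Quotient.mk I γ)).comap (Ideal.Quotient.mk I)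

theorem mem_powersMod {I : Ideal R} {γ r : R} : r ∈ powersMod I γ ↔ ∃ e, γ ^ e - r ∈ I := by
  simp only [powersMod, Submonoid.mem_comap, Submonoid.mem_powers_iff, ← map_pow, Ideal.Quotient.eq]

theorem AdicallyFlatAway.flat_localizedModule [IsNoetherianRing A] [IsNoetherianRing R]
    [Module.Finite R M] {g : A} {I : Ideal R} (hM : AdicallyFlatAway g I M) :
    Module.Flat A (LocalizedModule (powersMod I (algebraMap A R g)) M) := by
  refine _root_.flat_localizedModule fun a z hz => ?_
  have := finite_tensorProduct_of_isScalarTower (A := A) (R := R) (M := M) (L := a)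
  obtain ⟨e, r, hr, he⟩ := exists_pow_smul_eq_smul (I := I) (γ := algebraMap A R g)
      (z := z) fun k => by
    let mkQ := (I ^ k • (⊤ : Submodule R M)).mkQ.restrictScalars A
    have hz' : a.subtype.lTensor _ (mkQ.rTensor a z) = 0 := by
      rw [← LinearMap.comp_apply, LinearMap.lTensor_comp_rTensor,
        ← LinearMap.rTensor_comp_lTensor, LinearMap.comp_apply, hz, map_zero]
    obtain ⟨e, he⟩ := (hM k).exists_smul_eq_zero a.injective_subtype hz'
    refine ⟨e, mem_smul_top_of_rTensor_mkQ_eq_zero (A := A) ?_⟩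
    rw [← map_pow, algebraMap_smul, map_smul, he]
  exact ⟨algebraMap A R g ^ e - r, mem_powersMod.2 ⟨e, by rwa [sub_sub_cancel]⟩,
    by rw [sub_smul, he, sub_self]⟩

theorem AdicallyFlatAway.exists_pow_smul_eq_smul [IsNoetherianRing A] [IsNoetherianRing R]
    [Module.Finite R P] {g : A} {I : Ideal R} (hP : AdicallyFlatAway g I P) {f : M →ₗ[R] N}
    {q : N →ₗ[R] P} (hf : Function.Injective f) (hq : Function.Surjective q)
    (hfq : Function.Exact f q) {z : M ⊗[A] L} (hz : (f.restrictScalars A).rTensor L z = 0) :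
    ∃ e, ∃ r ∈ I, g ^ e • z = r • z := by
  have := hP.flat_localizedModule (R := R)
  obtain ⟨t, ht, htz⟩ := exists_smul_eq_zero_of_flat_localizedModule
    (powersMod I (algebraMap A R g)) hf hq hfq hz
  obtain ⟨e, he⟩ := mem_powersMod.1 ht
  exact ⟨e, _, he, by rw [sub_smul, htz, sub_zero, ← map_pow, algebraMap_smul]⟩

end LocalFlatness

section ContinuousDual

universe u

variable (A : Type*) [CommRing A] {R : Type u} [CommRing R] [Algebra A R] (I : Ideal R)
  (X : Type u) [AddCommGroup X] [Module R X] [Module A X] [IsScalarTower A R X]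
  {Y Z : Type u} [AddCommGroup Y] [Module R Y] [Module A Y] [IsScalarTower A R Y]
  [AddCommGroup Z] [Module R Z] [Module A Z] [IsScalarTower A R Z]

/-- The continuous `A`-linear dual of `X`, where `X` carries the `I`-adic topology and `A` the
discrete one. -/
def ContinuousDual : Type _ :=
  ↥(⨆ k : ℕ, ((I ^ k • ⊤ : Submodule R X).restrictScalars A).dualAnnihilator)

noncomputable instance : AddCommGroup (ContinuousDual A I X) :=
  inferInstanceAs (AddCommGroup ↥(⨆ _ : ℕ, Submodule.dualAnnihilator _))

noncomputable instance : Module A (ContinuousDual A I X) :=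
  inferInstanceAs (Module A ↥(⨆ _ : ℕ, Submodule.dualAnnihilator _))

variable {A I X}

theorem dualAnnihilator_pow_smul_top_mono : Monotone fun k : ℕ =>
    ((I ^ k • ⊤ : Submodule R X).restrictScalars A).dualAnnihilator := fun k l hkl φ hφ => by
  rw [Submodule.mem_dualAnnihilator] at hφ ⊢
  exact fun x hx => hφ x (Submodule.smul_mono_left (Ideal.pow_le_pow_right hkl) hx)

theorem mem_iSup_dualAnnihilator {φ : Module.Dual A X} :
    φ ∈ ⨆ k : ℕ, ((I ^ k • ⊤ : Submodule R X).restrictScalars A).dualAnnihilator ↔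
      ∃ k : ℕ, ∀ x ∈ I ^ k • (⊤ : Submodule R X), φ x = 0 := by
  rw [Submodule.mem_iSup_of_directed _ dualAnnihilator_pow_smul_top_mono.directed_le]
  simp only [Submodule.mem_dualAnnihilator, Submodule.restrictScalars_mem]

namespace ContinuousDual

/-- The functional underlying an element of the continuous dual. -/
noncomputable def toDual : ContinuousDual A I X →ₗ[A] Module.Dual A X := Submodule.subtype _

noncomputable instance : FunLike (ContinuousDual A I X) X A where
  coe φ := φ.toDual
  coe_injective _ _ h := Subtype.ext (DFunLike.coe_injective h)

@[ext]
theorem ext {φ φ' : ContinuousDual A I X} (h : ∀ x, φ x = φ' x) : φ = φ' := DFunLike.ext _ _ h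

theorem exists_pow_smul_top (φ : ContinuousDual A I X) :
    ∃ k : ℕ, ∀ x ∈ I ^ k • (⊤ : Submodule R X), φ x = 0 := mem_iSup_dualAnnihilator.1 φ.2

/-- A functional killing `I ^ k • X` as an element of the continuous dual. -/
def mk (φ : Module.Dual A X) (h : ∃ k : ℕ, ∀ x ∈ I ^ k • (⊤ : Submodule R X), φ x = 0) :
    ContinuousDual A I X := ⟨φ, mem_iSup_dualAnnihilator.2 h⟩

@[simp]
theorem toDual_apply (φ : ContinuousDual A I X) (x : X) : φ.toDual x = φ x := rfl

instance : LinearMapClass (ContinuousDual A I X) A X A where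
  map_add φ := φ.toDual.map_add
  map_smulₛₗ φ := φ.toDual.map_smul

@[simp]
theorem add_apply (φ φ' : ContinuousDual A I X) (x : X) : (φ + φ') x = φ x + φ' x := rfl

@[simp]
theorem zero_apply (x : X) : (0 : ContinuousDual A I X) x = 0 := rfl

theorem exists_pow_smul_top_comp (φ : ContinuousDual A I Y) (f : X →ₗ[R] Y) :
    ∃ k : ℕ, ∀ x ∈ I ^ k • (⊤ : Submodule R X), (φ.toDual ∘ₗ f.restrictScalars A) x = 0 := by
  obtain ⟨k, hk⟩ := φ.exists_pow_smul_top
  refine ⟨k, fun x hx => hk _ ?_⟩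
  have hfx := Submodule.mem_map_of_mem (f := f) hx
  rw [Submodule.map_smul''] at hfx
  exact Submodule.smul_mono le_rfl le_top hfx

noncomputable instance : SMul R (ContinuousDual A I X) where
  smul r φ := mk _ (φ.exists_pow_smul_top_comp (LinearMap.lsmul R X r))

@[simp]
theorem smul_apply (r : R) (φ : ContinuousDual A I X) (x : X) : (r • φ) x = φ (r • x) := rfl

@[simp]
theorem algebra_smul_apply (a : A) (φ : ContinuousDual A I X) (x : X) :
    (a • φ) x = a • φ x := rfl

noncomputable instance : Module R (ContinuousDual A I X) where
  one_smul φ := ext fun x => by simp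
  mul_smul r s φ := ext fun x => by simp [smul_smul, mul_comm]
  smul_zero r := ext fun _ => by simp
  smul_add r φ φ' := ext fun x => by simp
  add_smul r s φ := ext fun x => by simp [add_smul]
  zero_smul φ := ext fun x => by simp

instance : IsScalarTower A R (ContinuousDual A I X) where
  smul_assoc a r φ := ext fun x => by simp

variable (A I) in
/-- The transpose of an `R`-linear map, on continuous duals. -/
noncomputable def map (f : X →ₗ[R] Y) : ContinuousDual A I Y →ₗ[R] ContinuousDual A I X where
  toFun φ := mk _ (φ.exists_pow_smul_top_comp f)
  map_add' _ _ := rfl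
  map_smul' r φ := ext fun x => congrArg φ (f.map_smul r x).symm

@[simp]
theorem map_apply (f : X →ₗ[R] Y) (φ : ContinuousDual A I Y) (x : X) :
    map A I f φ x = φ (f x) := rfl

theorem map_injective {q : Y →ₗ[R] Z} (hq : Function.Surjective q) :
    Function.Injective (map A I q) := fun φ φ' h =>
  ext fun z => by
    obtain ⟨y, rfl⟩ := hq z
    exact DFunLike.congr_fun h y

theorem exists_map_eq {f : X →ₗ[R] Y} {q : Y →ₗ[R] Z}
    (hq : Function.Surjective q) (hfq : Function.Exact f q) {φ : ContinuousDual A I Y}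
    (hφ : map A I f φ = 0) : ∃ φ', map A I q φ' = φ := by
  have hker : LinearMap.ker (q.restrictScalars A) ≤ LinearMap.ker φ.toDual := fun y hy => by
    obtain ⟨x, rfl⟩ := (hfq y).1 hy
    exact DFunLike.congr_fun hφ x
  let φ' : Module.Dual A Z := (LinearMap.ker (q.restrictScalars A)).liftQ φ.toDual hker ∘ₗ
    ((q.restrictScalars A).quotKerEquivOfSurjective hq).symm
  have hφ' (y : Y) : φ' (q y) = φ y := by
    have hy : ((q.restrictScalars A).quotKerEquivOfSurjective hq).symm (q y) =
        (LinearMap.ker (q.restrictScalars A)).mkQ y :=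
      (LinearEquiv.symm_apply_eq _).2 rfl
    rw [LinearMap.comp_apply, LinearEquiv.coe_coe, hy, Submodule.mkQ_apply,
      Submodule.liftQ_apply, toDual_apply]
  obtain ⟨k, hk⟩ := φ.exists_pow_smul_top
  refine ⟨mk φ' ⟨k, fun z hz => ?_⟩, ext hφ'⟩
  rw [← LinearMap.range_eq_top.2 hq, ← Submodule.map_top, ← Submodule.map_smul''] at hz
  obtain ⟨y, hy, rfl⟩ := hz
  rw [hφ', hk y hy]

end ContinuousDual

open ContinuousDual

variable [IsNoetherianRing A] [Module.Finite A (R ⧸ I)] [IsNoetherianRing R] {g : A}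

theorem AdicallyFlatAway.flatAway_continuousDual [Module.Finite R X]
    (hX : AdicallyFlatAway g I X) : FlatAway g (ContinuousDual A I X) := by
  let W (k : ℕ) := (I ^ k • ⊤ : Submodule R X).restrictScalars A
  let D (k : ℕ) : Submodule A (ContinuousDual A I X) :=
    (W k).dualAnnihilator.comap toDual
  refine .of_monotone (X := D)
    (fun k l hkl => Submodule.comap_mono (dualAnnihilator_pow_smul_top_mono hkl))
    (fun φ => ?_) fun k => ?_
  · obtain ⟨k, hk⟩ := φ.exists_pow_smul_top
    exact ⟨k, (Submodule.mem_dualAnnihilator _).2 hk⟩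
  · have := finite_quotient_pow_smul_top (A := A) I X k
    have hdual : FlatAway g (X ⧸ W k →ₗ[A] A) :=
      (hX k).dual.of_linearEquiv
        (Submodule.Quotient.restrictScalarsEquiv A (I ^ k • ⊤ : Submodule R X)).dualMap
    have hle : (W k).dualAnnihilator ≤ ⨆ k, (W k).dualAnnihilator :=
      le_iSup (fun k => (W k).dualAnnihilator) k
    exact hdual.of_linearEquiv (N := D k) ((W k).dualQuotEquivDualAnnihilator ≪≫ₗ
      (Submodule.comapSubtypeEquivOfLe hle).symm)

/- By Artin–Rees a functional killing `I ^ k • X` descends to the image of `X` in `Y / I ^ m • Y`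
for large `m`, and there it extends up to a power of `g` because `Z / I ^ m • Z` is flat. -/
theorem AdicallyFlatAway.exists_continuousDualMap_eq_smul [Module.Finite R Y] [Module.Finite R Z]
    (hZ : AdicallyFlatAway g I Z) {f : X →ₗ[R] Y} {q : Y →ₗ[R] Z} (hf : Function.Injective f)
    (hq : Function.Surjective q) (hfq : Function.Exact f q) (φ : ContinuousDual A I X) :
    ∃ (e : ℕ) (φ' : ContinuousDual A I Y), ContinuousDual.map A I f φ' = g ^ e • φ := by
  obtain ⟨k, hk⟩ := φ.exists_pow_smul_top
  obtain ⟨c, hc⟩ := I.exists_pow_inf_eq_pow_smul (LinearMap.range f)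
  let U : Submodule R Y := I ^ (k + c) • ⊤
  let V : Submodule R Z := I ^ (k + c) • ⊤
  have hUV : U.map q = V := by
    rw [Submodule.map_smul'', Submodule.map_top, LinearMap.range_eq_top.2 hq]
  have hfU : U.comap f ≤ I ^ k • ⊤ := fun x hx => by
    have hfx : f x ∈ U ⊓ LinearMap.range f := ⟨hx, x, rfl⟩
    rw [hc _ (Nat.le_add_left c k), Nat.add_sub_cancel] at hfx
    have hle : I ^ k • (I ^ c • (⊤ : Submodule R Y) ⊓ LinearMap.range f) ≤
        (I ^ k • ⊤ : Submodule R X).map f := by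
      rw [Submodule.map_smul'', Submodule.map_top]
      exact Submodule.smul_mono le_rfl inf_le_right
    obtain ⟨x', hx', hxx'⟩ := hle hfx
    exact hf hxx' ▸ hx'
  let f' : (X ⧸ U.comap f) →ₗ[R] Y ⧸ U := (U.comap f).mapQ U f le_rfl
  let q' : (Y ⧸ U) →ₗ[R] Z ⧸ V := U.mapQ V q (Submodule.map_le_iff_le_comap.1 hUV.le)
  have hf' : Function.Injective f' := by
    rw [← LinearMap.ker_eq_bot, Submodule.ker_mapQ, Submodule.mkQ_map_self]
  have hq' : Function.Surjective q' := 
    LinearMap.range_eq_top.1 <| by rw [Submodule.range_mapQ, LinearMap.range_eq_top.2 hq,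
      Submodule.map_top, Submodule.range_mkQ]
  have hfq' : Function.Exact f' q' := by
    refine (hfq.exact_mapQ_iff le_rfl _).2 ?_
    rw [hUV]
    exact inf_le_right
  have := finite_quotient_pow_smul_top (A := A) I Z (k + c)
  let φ₁ : (X ⧸ U.comap f) →ₗ[A] A :=
    ((U.comap f).restrictScalars A).liftQ φ.toDual (fun x hx => hk x (hfU hx)) ∘ₗ
      (Submodule.Quotient.restrictScalarsEquiv A (U.comap f)).symm
  obtain ⟨e, φ₂, hφ₂⟩ := (hZ (k + c)).exists_extend (f := f'.restrictScalars A)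
    (q := q'.restrictScalars A) hf' hq' hfq' φ₁
  refine ⟨e, mk (φ₂ ∘ₗ U.mkQ.restrictScalars A) ⟨k + c, fun y hy => ?_⟩,
    ext fun x => LinearMap.congr_fun hφ₂ ((U.comap f).mkQ x)⟩
  have hy0 : U.mkQ y = 0 := (Submodule.Quotient.mk_eq_zero _).2 hy
  change φ₂ (U.mkQ y) = 0
  rw [hy0, map_zero]

variable [Module.Finite R X] [Module.Finite R Y] (ψ : X →ₗ[R] Y)

theorem flatAway_range_continuousDualMap (hrange : AdicallyFlatAway g I (LinearMap.range ψ))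
    (hcoker : AdicallyFlatAway g I (Y ⧸ LinearMap.range ψ)) :
    FlatAway g (LinearMap.range (ContinuousDual.map A I ψ)) := by
  let res := ContinuousDual.map A I (LinearMap.range ψ).subtype
  have hres : BijectiveAway g ((LinearMap.range res).subtype.restrictScalars A) := by
    refine ⟨fun φ hφ => ⟨0, by rw [pow_zero, one_smul]; exact Subtype.ext hφ⟩, fun φ => ?_⟩
    obtain ⟨e, φ', hφ'⟩ := hcoker.exists_continuousDualMap_eq_smul
      (Submodule.injective_subtype _) (Submodule.mkQ_surjective _)
      (LinearMap.exact_subtype_mkQ _) φ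
    exact ⟨e, ⟨_, φ', rfl⟩, hφ'⟩
  have hmap : ContinuousDual.map A I ψ = ContinuousDual.map A I ψ.rangeRestrict ∘ₗ res := rfl
  rw [hmap, LinearMap.range_comp]
  exact (hrange.flatAway_continuousDual.of_bijectiveAway hres).of_linearEquiv
    ((Submodule.equivMapOfInjective _
      (map_injective ψ.surjective_rangeRestrict) _).restrictScalars A)

theorem flatAway_quotient_range_continuousDualMap
    (hker : AdicallyFlatAway g I (LinearMap.ker ψ))
    (hrange : AdicallyFlatAway g I (LinearMap.range ψ))
    (hcoker : AdicallyFlatAway g I (Y ⧸ LinearMap.range ψ)) :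
    FlatAway g (ContinuousDual A I X ⧸ LinearMap.range (ContinuousDual.map A I ψ)) := by
  let res := ContinuousDual.map A I (LinearMap.ker ψ).subtype
  have hexact : Function.Exact (LinearMap.ker ψ).subtype ψ.rangeRestrict := fun x => by
    simp [Subtype.ext_iff]
  have hle : LinearMap.range (ContinuousDual.map A I ψ) ≤ LinearMap.ker res := by
    rintro - ⟨φ, rfl⟩
    exact ContinuousDual.ext fun x => by
      rw [map_apply, map_apply, Submodule.subtype_apply, LinearMap.map_coe_ker, map_zero,
        ContinuousDual.zero_apply]
  refine hker.flatAway_continuousDual.of_bijectiveAway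
    (f := (Submodule.liftQ _ res hle).restrictScalars A) ⟨fun y hy => ?_, fun φ => ?_⟩
  · obtain ⟨φ, rfl⟩ := Submodule.mkQ_surjective _ y
    obtain ⟨φ', rfl⟩ := exists_map_eq ψ.surjective_rangeRestrict hexact hy
    obtain ⟨e, φ'', hφ''⟩ := hcoker.exists_continuousDualMap_eq_smul
      (Submodule.injective_subtype _) (Submodule.mkQ_surjective _)
      (LinearMap.exact_subtype_mkQ _) φ'
    refine ⟨e, (Submodule.Quotient.mk_eq_zero _).2 ⟨φ'', ContinuousDual.ext fun x => ?_⟩⟩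
    exact DFunLike.congr_fun hφ'' (ψ.rangeRestrict x)
  · obtain ⟨e, φ', hφ'⟩ := hrange.exists_continuousDualMap_eq_smul
      (Submodule.injective_subtype _) ψ.surjective_rangeRestrict hexact φ
    exact ⟨e, Submodule.Quotient.mk φ', hφ'⟩

end ContinuousDual

section FreeDuality

universe u

variable {A : Type*} [CommRing A] {R : Type u} [CommRing R] [Algebra A R] {I : Ideal R}
  {E F : Type u} [AddCommGroup E] [Module R E] [AddCommGroup F] [Module R F]

variable (A I F) in
/-- The pairing `v ⊗ d ↦ (w ↦ d (w v))` of `F ⊗ Dᵣ` with the dual module `F*`, where `Dᵣ` is the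
continuous dual of `R`. -/
noncomputable def tensorContinuousDual :
    F ⊗[R] ContinuousDual A I R →ₗ[R] ContinuousDual A I (Module.Dual R F) :=
  TensorProduct.lift <| LinearMap.mk₂ R
    (fun v d => ContinuousDual.map A I (Module.Dual.eval R F v) d)
    (fun v v' d => ContinuousDual.ext fun w => by simp)
    (fun r v d => ContinuousDual.ext fun w => by simp)
    (fun v d d' => rfl) (fun r v d => map_smul _ r d)

@[simp]
theorem tensorContinuousDual_tmul_apply (v : F) (d : ContinuousDual A I R) (w : Module.Dual R F) :
    tensorContinuousDual A I F (v ⊗ₜ d) w = d (w v) := rfl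

theorem tensorContinuousDual_rTensor (f : E →ₗ[R] F) (z : E ⊗[R] ContinuousDual A I R) :
    tensorContinuousDual A I F (f.rTensor _ z) =
      ContinuousDual.map A I f.dualMap (tensorContinuousDual A I E z) := by
  induction z with
  | zero => simp
  | add a b ha hb => simp only [map_add, ha, hb]
  | tmul v d => rfl

theorem tensorContinuousDual_bijective [Module.Free R F] [Module.Finite R F] :
    Function.Bijective (tensorContinuousDual A I F) := by
  let b := Module.Free.chooseBasis R F
  let inv (φ : ContinuousDual A I (Module.Dual R F)) : F ⊗[R] ContinuousDual A I R :=
    ∑ i, b i ⊗ₜ ContinuousDual.map A I (LinearMap.toSpanSingleton R _ (b.coord i)) φ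
  refine Function.bijective_iff_has_inverse.2 ⟨inv, fun z => ?_, fun φ => ?_⟩
  · induction z with
    | zero => simp [inv]
    | add a b ha hb =>
      simp only [inv, map_add, TensorProduct.tmul_add, Finset.sum_add_distrib] at ha hb ⊢
      rw [ha, hb]
    | tmul v d =>
      have hcoord (i) : ContinuousDual.map A I (LinearMap.toSpanSingleton R _ (b.coord i))
          (tensorContinuousDual A I F (v ⊗ₜ d)) = b.coord i v • d :=
        ContinuousDual.ext fun r => by simp [mul_comm]
      simp only [inv, hcoord, TensorProduct.tmul_smul, TensorProduct.smul_tmul',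
        ← TensorProduct.sum_tmul, b.coord_apply, b.sum_repr]
  · ext w
    calc tensorContinuousDual A I F (inv φ) w = ∑ i, φ (w (b i) • b.coord i) := by
          rw [map_sum, ← ContinuousDual.toDual_apply, map_sum, LinearMap.sum_apply]; rfl
      _ = φ w := by rw [← map_sum, b.sum_dual_apply_smul_coord]

variable (I) in
theorem exists_flatAway_range_rTensor_continuousDual [IsDomain A] [IsNoetherianRing A]
    [IsNoetherianRing R] [Module.Finite A (R ⧸ I)] [Module.Free R F] [Module.Finite R F]
    [Module A F] [IsScalarTower A R F] [Module.Finite R E] (j : E →ₗ[R] F) :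
    ∃ g : A, g ≠ 0 ∧ FlatAway g (LinearMap.range (j.rTensor (ContinuousDual A I R))) ∧
      FlatAway g ((F ⊗[R] ContinuousDual A I R) ⧸
        LinearMap.range (j.rTensor (ContinuousDual A I R))) := by
  obtain ⟨p, s, hs⟩ := Module.Finite.exists_fin' R E
  let ψ := (j ∘ₗ s).dualMap
  obtain ⟨g₁, hg₁, h₁⟩ := exists_adicallyFlatAway (A := A) I (LinearMap.ker ψ)
  obtain ⟨g₂, hg₂, h₂⟩ := exists_adicallyFlatAway (A := A) I (LinearMap.range ψ)
  obtain ⟨g₃, hg₃, h₃⟩ := exists_adicallyFlatAway (A := A) I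
    (Module.Dual R (Fin p → R) ⧸ LinearMap.range ψ)
  let θ := LinearEquiv.ofBijective (tensorContinuousDual A I F) tensorContinuousDual_bijective
  have hmap : (LinearMap.range (j.rTensor (ContinuousDual A I R))).map (θ : _ →ₗ[R] _) =
      LinearMap.range (ContinuousDual.map A I ψ) := by
    have hcomp : (θ : _ →ₗ[R] _) ∘ₗ (j ∘ₗ s).rTensor (ContinuousDual A I R) =
        ContinuousDual.map A I ψ ∘ₗ tensorContinuousDual A I (Fin p → R) :=
      LinearMap.ext (tensorContinuousDual_rTensor _)
    rw [← LinearMap.range_comp_of_range_eq_top (ContinuousDual.map A I ψ)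
      (LinearMap.range_eq_top.2 tensorContinuousDual_bijective.2), ← hcomp, LinearMap.range_comp,
      LinearMap.rTensor_comp, LinearMap.range_comp_of_range_eq_top _
        (LinearMap.range_eq_top.2 (LinearMap.rTensor_surjective _ hs))]
  have hrange := h₂.of_dvd (Dvd.intro (g₁ * g₃) (by ring) : g₂ ∣ g₁ * g₂ * g₃)
  have hcoker := h₃.of_dvd (Dvd.intro_left (g₁ * g₂) rfl : g₃ ∣ g₁ * g₂ * g₃)
  refine ⟨g₁ * g₂ * g₃, by simp [hg₁, hg₂, hg₃], ?_, ?_⟩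
  · have h := flatAway_range_continuousDualMap ψ hrange hcoker
    rw [← hmap] at h
    exact h.of_linearEquiv ((θ.submoduleMap _).symm.restrictScalars A)
  · have h := flatAway_quotient_range_continuousDualMap ψ
      (h₁.of_dvd (Dvd.intro (g₂ * g₃) (by ring))) hrange hcoker
    exact h.of_linearEquiv ((Submodule.Quotient.equiv _ _ θ hmap).symm.restrictScalars A)

end FreeDuality

section DirectLimit

variable {S ι : Type*} [CommRing S] [Preorder ι] [DecidableEq ι] [Nonempty ι] [IsDirectedOrder ι]
  {G G' G'' : ι → Type*}
  [∀ k, AddCommGroup (G k)] [∀ k, Module S (G k)] [∀ k, AddCommGroup (G' k)]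
  [∀ k, Module S (G' k)] [∀ k, AddCommGroup (G'' k)] [∀ k, Module S (G'' k)]
  {f : ∀ i j, i ≤ j → G i →ₗ[S] G j} {f' : ∀ i j, i ≤ j → G' i →ₗ[S] G' j}
  {f'' : ∀ i j, i ≤ j → G'' i →ₗ[S] G'' j}

theorem directLimit_map_exact [DirectedSystem G'' (f'' · · ·)] {g : ∀ i, G i →ₗ[S] G' i}
    (hg : ∀ i j h, g j ∘ₗ f i j h = f' i j h ∘ₗ g i) {g' : ∀ i, G' i →ₗ[S] G'' i}
    (hg' : ∀ i j h, g' j ∘ₗ f' i j h = f'' i j h ∘ₗ g' i)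
    (hexact : ∀ i, Function.Exact (g i) (g' i)) :
    Function.Exact (Module.DirectLimit.map g hg) (Module.DirectLimit.map g' hg') := by
  intro y
  constructor
  · intro hy
    obtain ⟨i, y, rfl⟩ := Module.DirectLimit.exists_of y
    rw [Module.DirectLimit.map_apply_of] at hy
    obtain ⟨j, hij, hj⟩ := Module.DirectLimit.of.zero_exact hy
    obtain ⟨x, hx⟩ := (hexact j (f' i j hij y)).1 ((LinearMap.congr_fun (hg' i j hij) y).trans hj)
    refine ⟨Module.DirectLimit.of _ _ _ _ j x, ?_⟩
    rw [Module.DirectLimit.map_apply_of, hx, Module.DirectLimit.of_f]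
  · rintro ⟨x, rfl⟩
    obtain ⟨i, x, rfl⟩ := Module.DirectLimit.exists_of x
    rw [Module.DirectLimit.map_apply_of, Module.DirectLimit.map_apply_of,
      (hexact i).apply_apply_eq_zero, map_zero]

theorem subsingleton_directLimit [∀ i, Subsingleton (G i)] :
    Subsingleton (Module.DirectLimit G f) := by
  refine ⟨fun x y => ?_⟩
  obtain ⟨i, x, y, rfl, rfl⟩ := Module.DirectLimit.exists_of₂ x y
  rw [Subsingleton.elim x y]

end DirectLimit

section ExtLimit

open CategoryTheory Abelian

universe u

variable {S : Type u} [CommRing S]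

/-- The morphism `S ⧸ I ⟶ S ⧸ J` of cyclic modules for `I ≤ J`. -/
abbrev cyclicMap {I J : Ideal S} (h : I ≤ J) :
    ModuleCat.of S (S ⧸ I) ⟶ ModuleCat.of S (S ⧸ J) :=
  ModuleCat.ofHom (Submodule.factor h)

theorem cyclicMap_refl (I : Ideal S) : cyclicMap (le_refl I) = 𝟙 _ := by
  ext
  rfl

theorem cyclicMap_comp {I J K : Ideal S} (h : I ≤ J) (h' : J ≤ K) :
    cyclicMap h ≫ cyclicMap h' = cyclicMap (h.trans h') := by
  ext
  rfl

theorem mk₀_cyclicMap_comp_mk₀_cyclicMap_comp {I J K : Ideal S} (h : I ≤ J) (h' : J ≤ K)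
    {N : ModuleCat.{u} S} {i : ℕ} (x : Ext (ModuleCat.of S (S ⧸ K)) N i) :
    (Ext.mk₀ (cyclicMap h)).comp ((Ext.mk₀ (cyclicMap h')).comp x (zero_add i)) (zero_add i) =
      (Ext.mk₀ (cyclicMap (h.trans h'))).comp x (zero_add i) := by
  rw [Ext.mk₀_comp_mk₀_assoc, cyclicMap_comp]

variable {a : ℕ → Ideal S} (ha : Antitone a)

/-- The transition maps of the direct system `k ↦ Extⁱ(S ⧸ a k, N)`. -/
noncomputable def extTransition (i : ℕ) (N : ModuleCat.{u} S) (k l : ℕ) (h : k ≤ l) :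
    Ext (ModuleCat.of S (S ⧸ a k)) N i →ₗ[S] Ext (ModuleCat.of S (S ⧸ a l)) N i :=
  (Ext.mk₀ (cyclicMap (ha h))).precompOfLinear S N (zero_add i)

theorem extTransition_apply (i : ℕ) (N : ModuleCat.{u} S) {k l : ℕ} (h : k ≤ l)
    (x : Ext (ModuleCat.of S (S ⧸ a k)) N i) :
    extTransition ha i N k l h x = (Ext.mk₀ (cyclicMap (ha h))).comp x (zero_add i) :=
  rfl

instance (i : ℕ) (N : ModuleCat.{u} S) :
    DirectedSystem (fun k => Ext (ModuleCat.of S (S ⧸ a k)) N i)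
      (fun k l h => extTransition ha i N k l h) where
  map_self k x := by rw [extTransition_apply, cyclicMap_refl, Ext.mk₀_id_comp]
  map_map _ _ _ _ _ x := mk₀_cyclicMap_comp_mk₀_cyclicMap_comp _ _ x

/-- The direct limit `colim Extⁱ(S ⧸ a k, N)` along a decreasing sequence of ideals, which computes
local cohomology when `a` is cofinal with the powers of an ideal. -/
abbrev ExtLimit (i : ℕ) (N : ModuleCat.{u} S) : Type u :=
  Module.DirectLimit (fun k => Ext (ModuleCat.of S (S ⧸ a k)) N i) (extTransition ha i N)

namespace ExtLimit

/-- The map induced on `ExtLimit` by a morphism of modules. -/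
noncomputable def map (i : ℕ) {N N' : ModuleCat.{u} S} (f : N ⟶ N') :
    ExtLimit ha i N →ₗ[S] ExtLimit ha i N' :=
  Module.DirectLimit.map (fun k => (Ext.mk₀ f).postcompOfLinear S _ (add_zero i))
    fun k l h => LinearMap.ext fun x => Ext.comp_assoc _ _ _ (by lia) (by lia) (by lia)

/-- The connecting map of `ExtLimit` attached to a short exact sequence. -/
noncomputable def connecting (i : ℕ) {T : ShortComplex (ModuleCat.{u} S)} (hT : T.ShortExact) :
    ExtLimit ha i T.X₃ →ₗ[S] ExtLimit ha (i + 1) T.X₁ :=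
  Module.DirectLimit.map (fun k => hT.extClass.postcompOfLinear S _ rfl)
    fun k l h => LinearMap.ext fun x => Ext.comp_assoc _ _ _ (by lia) (by lia) (by lia)

theorem exact_connecting_map (i : ℕ) {T : ShortComplex (ModuleCat.{u} S)} (hT : T.ShortExact) :
    Function.Exact (connecting ha i hT) (map ha (i + 1) T.f) := by
  refine directLimit_map_exact _ _ fun k x => ⟨fun hx => ?_, ?_⟩
  · exact Ext.covariant_sequence_exact₁ _ hT x hx rfl
  · rintro ⟨x, rfl⟩
    refine (Ext.comp_assoc_of_third_deg_zero _ _ _ (by lia)).trans ?_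
    rw [hT.extClass_comp, Ext.comp_zero]

theorem exact_map_map (i : ℕ) {T : ShortComplex (ModuleCat.{u} S)} (hT : T.ShortExact) :
    Function.Exact (map ha i T.f) (map ha i T.g) := by
  refine directLimit_map_exact _ _ fun k x => ⟨fun hx => ?_, ?_⟩
  · exact Ext.covariant_sequence_exact₂ _ hT x hx
  · rintro ⟨x, rfl⟩
    refine (Ext.comp_assoc_of_third_deg_zero _ _ _ (by lia)).trans ?_
    rw [Ext.mk₀_comp_mk₀, T.zero, Ext.mk₀_zero, Ext.comp_zero]

theorem exact_map_connecting (i : ℕ) {T : ShortComplex (ModuleCat.{u} S)} (hT : T.ShortExact) :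
    Function.Exact (map ha i T.g) (connecting ha i hT) := by
  refine directLimit_map_exact _ _ fun k x => ⟨fun hx => ?_, ?_⟩
  · exact Ext.covariant_sequence_exact₃ _ hT x rfl hx
  · rintro ⟨x, rfl⟩
    refine (Ext.comp_assoc_of_second_deg_zero _ _ _ (by lia)).trans ?_
    rw [hT.comp_extClass, Ext.comp_zero]

end ExtLimit

end ExtLimit

section ExtComparison

open CategoryTheory Abelian

universe w v u

variable (R : Type*) [Ring R] {C : Type u} [Category.{v} C] [Abelian C] [Linear R C]
  {X X' : C}

/-- The map of complexes `Hom(P, Y) ⟶ Hom(P', Y)` given by precomposition with a chain map. -/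
noncomputable def linearYonedaMap {P P' : ChainComplex C ℕ} (φ : P' ⟶ P) (Y : C) :
    P.linearYonedaObj R Y ⟶ P'.linearYonedaObj R Y :=
  (HomologicalComplex.unopFunctor _ _).map
    ((((linearYoneda R C).obj Y).rightOp.mapHomologicalComplex _).map φ).op

theorem isoExt_inv_naturality [EnoughProjectives C] {P : ProjectiveResolution X}
    {P' : ProjectiveResolution X'} {g : X' ⟶ X} (φ : ProjectiveResolution.Hom P' P g) (n : ℕ)
    (Y : C) :
    (P.isoExt n Y).inv ≫ ((_root_.Ext R C n).map g.op).app Y =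
      HomologicalComplex.homologyMap (linearYonedaMap R φ.hom Y) n ≫ (P'.isoExt n Y).inv := by
  let F := ((linearYoneda R C).obj Y).rightOp
  have hφ : φ.hom.f 0 ≫ P.π.f 0 = P'.π.f 0 ≫ g := by
    rw [φ.hom_f_zero_comp_π_f_zero, HomologicalComplex.single_map_f_self]
    simp
  have hderived := ProjectiveResolution.isoLeftDerivedObj_hom_naturality g P' P φ.hom hφ F n
  have hop := HomologicalComplex.homologyOp_hom_naturality (linearYonedaMap R φ.hom Y) n
  have hcomp : ((F.leftDerived n).map g ≫ (P.isoLeftDerivedObj F n).hom) ≫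
        ((P.complex.linearYonedaObj R Y).homologyOp n).hom =
      ((P'.isoLeftDerivedObj F n).hom ≫ ((P'.complex.linearYonedaObj R Y).homologyOp n).hom) ≫
        (HomologicalComplex.homologyMap (linearYonedaMap R φ.hom Y) n).op :=
    congr($hderived ≫ ((P.complex.linearYonedaObj R Y).homologyOp n).hom).trans
      ((Category.assoc _ _ _).trans ((congrArg ((P'.isoLeftDerivedObj F n).hom ≫ ·) hop).trans
        (Category.assoc _ _ _).symm))
  exact congrArg Quiver.Hom.unop hcomp

section Cocycles

variable [HasExt.{w} C] (P : ProjectiveResolution X) {Y : C} {n : ℕ}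

theorem smul_extMk (r : R) (f : P.complex.X n ⟶ Y) (hf : P.complex.d (n + 1) n ≫ f = 0) :
    r • P.extMk f (n + 1) rfl hf =
      P.extMk (r • f) (n + 1) rfl (by rw [Linear.comp_smul, hf, smul_zero]) := by
  rw [Ext.smul_eq_comp_mk₀, P.extMk_comp_mk₀]
  congr 1
  rw [Linear.comp_smul, Category.comp_id]

theorem extMk_eq_zero_iff_exists_prev (f : P.complex.X n ⟶ Y)
    (hf : P.complex.d (n + 1) n ≫ f = 0) :
    P.extMk f (n + 1) rfl hf = 0 ↔
      ∃ g : P.complex.X ((ComplexShape.up ℕ).prev n) ⟶ Y, P.complex.d n _ ≫ g = f := by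
  cases n with
  | zero =>
    have hd (j : ℕ) : P.complex.d 0 j = 0 := P.complex.shape _ _ (Nat.succ_ne_zero j)
    have hzero : Limits.IsZero (P.cochainComplex.X 1) :=
      P.cochainComplex.isZero_of_isStrictlyLE 0 1
    rw [← P.extEquivCohomologyClass.apply_eq_iff_eq, P.extEquivCohomologyClass_extMk,
      P.extEquivCohomologyClass_zero, CochainComplex.HomComplex.CohomologyClass.mk_eq_zero_iff,
      CochainComplex.HomComplex.Cocycle.toSingleMk_mem_coboundaries_iff _ _ _ _ _ 1 (by lia),
      hzero.eq_of_tgt (P.cochainComplex.d _ _) 0, hd]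
    simp [eq_comm (a := (0 : _ ⟶ Y))]
  | succ n => rw [P.extMk_eq_zero_iff _ _ _ _ n rfl, CochainComplex.prev_nat_succ]

/-- The class in `Extⁿ(X, Y)` of a cocycle of `Hom(P, Y)`. -/
noncomputable def cyclesToExt (Y : C) (n : ℕ) :
    (P.complex.linearYonedaObj R Y).cycles n →ₗ[R] Ext X Y n where
  toFun c := P.extMk ((P.complex.linearYonedaObj R Y).iCycles n c) (n + 1) rfl
      (congr($((P.complex.linearYonedaObj R Y).iCycles_d n (n + 1)) c))
  map_add' c c' := by
    simp only [map_add]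
    exact (P.add_extMk _ _ _ _ _ _).symm
  map_smul' r c := by
    simp only [map_smul]
    exact (smul_extMk R P _ _ _).symm

theorem cyclesToExt_eq_extMk {c : (P.complex.linearYonedaObj R Y).cycles n}
    {f : P.complex.X n ⟶ Y} (hc : (P.complex.linearYonedaObj R Y).iCycles n c = f)
    (hf : P.complex.d (n + 1) n ≫ f = 0) : cyclesToExt R P Y n c = P.extMk f (n + 1) rfl hf := by
  subst hc
  rfl

theorem cyclesToExt_surjective : Function.Surjective (cyclesToExt R P Y n) := by
  intro x
  obtain ⟨f, hf, rfl⟩ := P.extMk_surjective x (n + 1) rfl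
  let K := P.complex.linearYonedaObj R Y
  have hexact := ShortComplex.exact_of_f_is_kernel (.mk _ _ (K.iCycles_d n (n + 1)))
    (K.cyclesIsKernel n (n + 1) (CochainComplex.next ℕ n))
  obtain ⟨c, rfl⟩ := (ShortComplex.moduleCat_exact_iff _).1 hexact f hf
  exact ⟨c, rfl⟩

theorem ker_cyclesToExt : LinearMap.ker (cyclesToExt R P Y n) =
    LinearMap.ker ((P.complex.linearYonedaObj R Y).homologyπ n).hom := by
  ext c
  let K := P.complex.linearYonedaObj R Y
  have hι : Function.Injective (K.homologyι n) := (ModuleCat.mono_iff_injective _).1 inferInstance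
  have hπι : K.homologyι n (K.homologyπ n c) = K.pOpcycles n (K.iCycles n c) :=
    congr($(K.homology_π_ι n) c)
  have hboundary := (K.sc n).moduleCat_pOpcycles_eq_zero_iff (K.iCycles n c)
  have hext := extMk_eq_zero_iff_exists_prev P (K.iCycles n c) congr($(K.iCycles_d n (n + 1)) c)
  rw [LinearMap.mem_ker, LinearMap.mem_ker, ← map_eq_zero_iff _ hι, hπι]
  exact hext.trans hboundary.symm

/-- The comparison of the cohomology of `Hom(P, Y)` with `Extⁿ(X, Y)`. -/
noncomputable def homologyEquivExt (Y : C) (n : ℕ) :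
    (P.complex.linearYonedaObj R Y).homology n ≃ₗ[R] Ext X Y n :=
  (LinearMap.quotKerEquivOfSurjective _
      ((ModuleCat.epi_iff_surjective ((P.complex.linearYonedaObj R Y).homologyπ n)).1
        inferInstance)).symm ≪≫ₗ
    Submodule.quotEquivOfEq _ _ (ker_cyclesToExt R P).symm ≪≫ₗ
      LinearMap.quotKerEquivOfSurjective _ (cyclesToExt_surjective R P)

theorem homologyEquivExt_homologyπ (c : (P.complex.linearYonedaObj R Y).cycles n) :
    homologyEquivExt R P Y n ((P.complex.linearYonedaObj R Y).homologyπ n c) =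
      cyclesToExt R P Y n c := by
  have hsurj := (ModuleCat.epi_iff_surjective ((P.complex.linearYonedaObj R Y).homologyπ n)).1
    inferInstance
  have hc : (LinearMap.quotKerEquivOfSurjective _ hsurj).symm
      ((P.complex.linearYonedaObj R Y).homologyπ n c) = Submodule.Quotient.mk c :=
    (LinearEquiv.symm_apply_eq _).2 rfl
  rw [homologyEquivExt, LinearEquiv.trans_apply, LinearEquiv.trans_apply, hc]
  rfl

theorem homologyEquivExt_homologyMap {P : ProjectiveResolution X} {P' : ProjectiveResolution X'}
    {g : X' ⟶ X} (φ : ProjectiveResolution.Hom P' P g)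
    (z : (P.complex.linearYonedaObj R Y).homology n) :
    homologyEquivExt R P' Y n (HomologicalComplex.homologyMap (linearYonedaMap R φ.hom Y) n z) =
      (Ext.mk₀ g).comp (homologyEquivExt R P Y n z) (zero_add n) := by
  let K := P.complex.linearYonedaObj R Y
  let K' := P'.complex.linearYonedaObj R Y
  let ψ : K ⟶ K' := linearYonedaMap R φ.hom Y
  obtain ⟨c, rfl⟩ := (ModuleCat.epi_iff_surjective (K.homologyπ n)).1 inferInstance z
  have hπ : HomologicalComplex.homologyMap ψ n (K.homologyπ n c) =
      K'.homologyπ n (HomologicalComplex.cyclesMap ψ n c) :=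
    congr($(HomologicalComplex.homologyπ_naturality ψ n) c)
  have hi : K'.iCycles n (HomologicalComplex.cyclesMap ψ n c) = φ.hom.f n ≫ K.iCycles n c :=
    congr($(HomologicalComplex.cyclesMap_i ψ n) c)
  rw [hπ, homologyEquivExt_homologyπ, homologyEquivExt_homologyπ]
  have hcocycle : P.complex.d (n + 1) n ≫ K.iCycles n c = 0 := congr($(K.iCycles_d n (n + 1)) c)
  have hcomp := ProjectiveResolution.mk₀_comp_extMk (K.iCycles n c) (n + 1) rfl hcocycle φ
  exact (cyclesToExt_eq_extMk R P' hi _).trans hcomp.symm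

end Cocycles

section Comparison

variable [HasExt.{w} C] [EnoughProjectives C]

/-- The comparison of the derived functors of `Hom(-, Y)` at `X` with the morphisms `X ⟶ Y[n]` of
the derived category. -/
noncomputable def extEquivExt (X Y : C) (n : ℕ) :
    ((_root_.Ext R C n).obj (.op X)).obj Y ≃ₗ[R] Ext X Y n :=
  ((projectiveResolution X).isoExt n Y).toLinearEquiv ≪≫ₗ homologyEquivExt R _ Y n

theorem extEquivExt_map (g : X' ⟶ X) (Y : C) (n : ℕ)
    (z : ((_root_.Ext R C n).obj (.op X)).obj Y) :
    extEquivExt R X' Y n (((_root_.Ext R C n).map g.op).app Y z) =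
      (Ext.mk₀ g).comp (extEquivExt R X Y n z) (zero_add n) := by
  let P := projectiveResolution X
  let P' := projectiveResolution X'
  let φ : P'.Hom P g := ⟨ProjectiveResolution.lift g P' P, by
    simpa [HomologicalComplex.single_map_f_self] using
      ProjectiveResolution.lift_commutes_zero g P' P⟩
  obtain ⟨w, rfl⟩ := (P.isoExt n Y).toLinearEquiv.symm.surjective z
  have hiso : ((_root_.Ext R C n).map g.op).app Y ((P.isoExt n Y).toLinearEquiv.symm w) =
      (P'.isoExt n Y).toLinearEquiv.symm
        (HomologicalComplex.homologyMap (linearYonedaMap R φ.hom Y) n w) :=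
    congr($(isoExt_inv_naturality R φ n Y) w)
  rw [hiso, extEquivExt, extEquivExt, LinearEquiv.trans_apply, LinearEquiv.trans_apply,
    LinearEquiv.apply_symm_apply, LinearEquiv.apply_symm_apply]
  exact homologyEquivExt_homologyMap R φ w

end Comparison

end ExtComparison

section LocalCohomology

open CategoryTheory Abelian

universe u

variable {S : Type u} [CommRing S]

theorem colimit_desc_bijective {J : Type} [SmallCategory J] [IsFiltered J]
    {F : J ⥤ ModuleCat.{u} S} (c : Limits.Cocone F)
    (hzero : ∀ j (x : F.obj j), c.ι.app j x = 0 → ∃ k, ∃ f : j ⟶ k, F.map f x = 0)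
    (hsurj : ∀ y : c.pt, ∃ j, ∃ x : F.obj j, c.ι.app j x = y) :
    Function.Bijective (Limits.colimit.desc F c).hom := by
  have hι (j) (x : F.obj j) : Limits.colimit.desc F c (Limits.colimit.ι F j x) = c.ι.app j x :=
    congr($(Limits.colimit.ι_desc c j) x)
  have := Limits.preservesSmallestFilteredColimits_of_preservesFilteredColimits
    (forget (ModuleCat.{u} S))
  refine ⟨(injective_iff_map_eq_zero _).2 fun z hz => ?_, fun y => ?_⟩
  · obtain ⟨j, x, rfl⟩ := Limits.Concrete.colimit_exists_rep F z
    obtain ⟨k, f, hf⟩ := hzero j x ((hι j x).symm.trans hz)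
    have hw : Limits.colimit.ι F k (F.map f x) = Limits.colimit.ι F j x :=
      congr($(Limits.colimit.w F f) x)
    rw [← hw, hf, map_zero]
  · obtain ⟨j, x, rfl⟩ := hsurj y
    exact ⟨_, hι j x⟩

variable {a : ℕ → Ideal S} (ha : Antitone a) {J : Ideal S}

/-- The map from `Extⁱ(S ⧸ Jᵏ, N)` to the direct limit along a sequence of smaller ideals. -/
noncomputable def powExtToExtLimit (hle : ∀ k, a k ≤ J ^ k) (i : ℕ) (N : ModuleCat.{u} S) (k : ℕ) :
    ((_root_.Ext S (ModuleCat.{u} S) i).obj (.op (ModuleCat.of S (S ⧸ J ^ k)))).obj N →ₗ[S]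
      ExtLimit ha i N :=
  Module.DirectLimit.of _ _ _ _ k ∘ₗ
    (Ext.mk₀ (cyclicMap (hle k))).precompOfLinear S N (zero_add i) ∘ₗ
      (extEquivExt S (ModuleCat.of S (S ⧸ J ^ k)) N i).toLinearMap

theorem powExtToExtLimit_apply (hle : ∀ k, a k ≤ J ^ k) (i : ℕ) (N : ModuleCat.{u} S) (k : ℕ)
    (x : ((_root_.Ext S (ModuleCat.{u} S) i).obj (.op (ModuleCat.of S (S ⧸ J ^ k)))).obj N) :
    powExtToExtLimit ha hle i N k x = Module.DirectLimit.of S ℕ _ (extTransition ha i N) k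
      ((Ext.mk₀ (cyclicMap (hle k))).comp (extEquivExt S _ N i x) (zero_add i)) :=
  rfl

theorem powExtToExtLimit_map (hle : ∀ k, a k ≤ J ^ k) (i : ℕ) (N : ModuleCat.{u} S) {k l : ℕ}
    (h : k ≤ l)
    (x : ((_root_.Ext S (ModuleCat.{u} S) i).obj (.op (ModuleCat.of S (S ⧸ J ^ k)))).obj N) :
    powExtToExtLimit ha hle i N l (((_root_.Ext S (ModuleCat.{u} S) i).map
      (cyclicMap (Ideal.pow_le_pow_right h)).op).app N x) = powExtToExtLimit ha hle i N k x := by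
  rw [powExtToExtLimit_apply, powExtToExtLimit_apply, extEquivExt_map,
    mk₀_cyclicMap_comp_mk₀_cyclicMap_comp, ← Module.DirectLimit.of_f (hij := h),
    extTransition_apply, mk₀_cyclicMap_comp_mk₀_cyclicMap_comp]

theorem exists_powExtToExtLimit_eq (hle : ∀ k, a k ≤ J ^ k) (hpow : ∀ k, ∃ l, J ^ l ≤ a k)
    (i : ℕ) (N : ModuleCat.{u} S) (y : ExtLimit ha i N) :
    ∃ k x, powExtToExtLimit ha hle i N k x = y := by
  obtain ⟨k, y, rfl⟩ := Module.DirectLimit.exists_of y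
  obtain ⟨l, hl⟩ := hpow k
  have hlk : J ^ max k l ≤ a k := (Ideal.pow_le_pow_right (le_max_right k l)).trans hl
  refine ⟨max k l, (extEquivExt S _ N i).symm ((Ext.mk₀ (cyclicMap hlk)).comp y (zero_add i)), ?_⟩
  rw [powExtToExtLimit_apply, LinearEquiv.apply_symm_apply,
    mk₀_cyclicMap_comp_mk₀_cyclicMap_comp, ← Module.DirectLimit.of_f (hij := le_max_left k l),
    extTransition_apply]

theorem powExtToExtLimit_eq_zero (hle : ∀ k, a k ≤ J ^ k) (hpow : ∀ k, ∃ l, J ^ l ≤ a k)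
    (i : ℕ) (N : ModuleCat.{u} S) {k : ℕ}
    (x : ((_root_.Ext S (ModuleCat.{u} S) i).obj (.op (ModuleCat.of S (S ⧸ J ^ k)))).obj N)
    (hx : powExtToExtLimit ha hle i N k x = 0) :
    ∃ l, ∃ h : k ≤ l, ((_root_.Ext S (ModuleCat.{u} S) i).map
      (cyclicMap (Ideal.pow_le_pow_right h)).op).app N x = 0 := by
  rw [powExtToExtLimit_apply] at hx
  obtain ⟨l, hkl, hl⟩ := Module.DirectLimit.of.zero_exact hx
  obtain ⟨m, hm⟩ := hpow l
  rw [extTransition_apply, mk₀_cyclicMap_comp_mk₀_cyclicMap_comp] at hl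
  have hml : J ^ max k m ≤ a l := (Ideal.pow_le_pow_right (le_max_right k m)).trans hm
  refine ⟨max k m, le_max_left k m, (extEquivExt S _ N i).injective ?_⟩
  rw [map_zero, extEquivExt_map, ← mk₀_cyclicMap_comp_mk₀_cyclicMap_comp hml
    ((ha hkl).trans (hle k)), hl, Ext.comp_zero]

/-- The cocone with point `ExtLimit ha i N` over the system `k ↦ Extⁱ(S ⧸ Jᵏ, N)` that defines
local cohomology. -/
noncomputable def powExtCocone (hle : ∀ k, a k ≤ J ^ k) (i : ℕ) (N : ModuleCat.{u} S) :
    Limits.Cocone (localCohomology.diagram (localCohomology.idealPowersDiagram J) i ⋙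
      (evaluation _ _).obj N) where
  pt := ModuleCat.of S (ExtLimit ha i N)
  ι.app k := ModuleCat.ofHom (powExtToExtLimit ha hle i N k.unop.unop)
  ι.naturality k l f := by
    ext x
    exact powExtToExtLimit_map ha hle i N f.unop.unop.down.down x

/-- Local cohomology with support in `J` is computed by any cofinal sequence of ideals. -/
noncomputable def localCohomologyEquivExtLimit (hle : ∀ k, a k ≤ J ^ k)
    (hpow : ∀ k, ∃ l, J ^ l ≤ a k) (i : ℕ) (N : ModuleCat.{u} S) :
    (localCohomology J i).obj N ≃ₗ[S] ExtLimit ha i N :=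
  (Limits.colimitObjIsoColimitCompEvaluation _ N).toLinearEquiv ≪≫ₗ
    LinearEquiv.ofBijective (Limits.colimit.desc _ (powExtCocone ha hle i N)).hom
      (colimit_desc_bijective _
        (fun k x hx =>
          have ⟨l, h, hl⟩ := powExtToExtLimit_eq_zero ha hle hpow i N (k := k.unop.unop) x hx
          ⟨.op (.op l), (homOfLE h).op.op, hl⟩)
        fun y =>
          have ⟨k, x, hx⟩ := exists_powExtToExtLimit_eq ha hle hpow i N y
          ⟨.op (.op k), x, hx⟩)

end LocalCohomology

section PowerRegular

open CategoryTheory Abelian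

universe u

variable {S : Type u} [CommRing S]

/-- The ideal generated by the `k`-th powers of the elements of a list. -/
def powerIdeal (xs : List S) (k : ℕ) : Ideal S :=
  Ideal.ofList (xs.map (· ^ k))

theorem powerIdeal_nil (k : ℕ) : powerIdeal ([] : List S) k = ⊥ :=
  Ideal.ofList_nil

theorem powerIdeal_cons (y : S) (xs : List S) (k : ℕ) :
    powerIdeal (y :: xs) k = Ideal.span {y ^ k} ⊔ powerIdeal xs k :=
  Ideal.ofList_cons _ _

theorem powerIdeal_le_cons (y : S) (xs : List S) (k : ℕ) :
    powerIdeal xs k ≤ powerIdeal (y :: xs) k :=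
  powerIdeal_cons y xs k ▸ le_sup_right

theorem powerIdeal_map {R : Type*} [CommRing R] (f : R →+* S) (xs : List R) (k : ℕ) :
    powerIdeal (xs.map f) k = (powerIdeal xs k).map f := by
  rw [powerIdeal, powerIdeal, Ideal.map_ofList, List.map_map, List.map_map]
  congr 2
  ext x
  simp

theorem pow_mem_powerIdeal {xs : List S} {x : S} (hx : x ∈ xs) (k : ℕ) : x ^ k ∈ powerIdeal xs k :=
  Ideal.subset_span (List.mem_map_of_mem hx)

theorem powerIdeal_le_iff {xs : List S} {k : ℕ} {J : Ideal S} :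
    powerIdeal xs k ≤ J ↔ ∀ x ∈ xs, x ^ k ∈ J := by
  simp [powerIdeal, Ideal.ofList, Ideal.span_le, Set.subset_def]

theorem powerIdeal_antitone (xs : List S) : Antitone (powerIdeal xs) := fun _ _ h =>
  powerIdeal_le_iff.2 fun _ hx => Ideal.mem_of_dvd _ (pow_dvd_pow _ h) (pow_mem_powerIdeal hx _)

theorem powerIdeal_le_pow (xs : List S) (k : ℕ) : powerIdeal xs k ≤ Ideal.ofList xs ^ k :=
  powerIdeal_le_iff.2 fun x hx =>
    have hx : x ∈ Ideal.ofList xs := Ideal.subset_span hx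
    Ideal.pow_mem_pow hx k

theorem exists_pow_le_powerIdeal (xs : List S) (k : ℕ) :
    ∃ l, Ideal.ofList xs ^ l ≤ powerIdeal xs k :=
  Ideal.exists_pow_le_of_le_radical_of_fg
    (Ideal.span_le.2 fun _ hx => ⟨k, pow_mem_powerIdeal hx k⟩)
    (Submodule.fg_span xs.finite_toSet)

/-- A list `x₁, …, xₙ` is power regular on `N` if, for each `k`, the sequence `xₙᵏ, …, x₁ᵏ`
is weakly regular on `N`. -/
def IsPowerRegular (N : Type*) [AddCommGroup N] [Module S N] : List S → Prop
  | [] => True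
  | y :: xs => IsPowerRegular N xs ∧
      ∀ k, IsSMulRegular (N ⧸ powerIdeal xs k • (⊤ : Submodule S N)) (y ^ k)

theorem IsPowerRegular.mem_of_smul_mem {N : Type*} [AddCommGroup N] [Module S N] {y : S}
    {xs : List S} (h : IsPowerRegular N (y :: xs)) {k : ℕ} {m : N}
    (hm : y ^ k • m ∈ powerIdeal xs k • (⊤ : Submodule S N)) :
    m ∈ powerIdeal xs k • (⊤ : Submodule S N) :=
  mem_of_isSMulRegular_quotient_of_smul_mem (h.2 k) hm

theorem IsPowerRegular.of_flat (F : Type*) [AddCommGroup F] [Module S F] [Module.Flat S F]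
    {xs : List S} (h : IsPowerRegular S xs) : IsPowerRegular F xs := by
  induction xs with
  | nil => trivial
  | cons y xs ih =>
    refine ⟨ih h.1, fun k => ?_⟩
    have hreg : IsSMulRegular (S ⧸ powerIdeal xs k) (y ^ k) := by
      have hk := h.2 k
      rwa [smul_eq_mul, Ideal.mul_top] at hk
    exact ((TensorProduct.tensorQuotEquivQuotSMul F (powerIdeal xs k)).isSMulRegular_congr _).1
      (hreg.lTensor F)

/-- The short exact sequence `S ⧸ J ⟶ S ⧸ J ⟶ S ⧸ (J + (yᵏ))` of a list `y :: xs`, where `J` is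
generated by the `k`-th powers of the elements of `xs`. -/
noncomputable abbrev powerShortComplex (y : S) (xs : List S) (k : ℕ) :
    ShortComplex (ModuleCat.{u} S) :=
  ShortComplex.mk (X₁ := ModuleCat.of S (S ⧸ powerIdeal xs k)) (y ^ k • 𝟙 _)
    (cyclicMap (powerIdeal_le_cons y xs k)) (by
      rw [Linear.smul_comp, Category.id_comp]
      ext
      refine (Submodule.Quotient.mk_eq_zero (powerIdeal (y :: xs) k) (x := y ^ k • (1 : S))).2 ?_
      simpa using pow_mem_powerIdeal (xs := y :: xs) List.mem_cons_self k)

theorem IsPowerRegular.powerShortComplex_shortExact {y : S} {xs : List S}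
    (h : IsPowerRegular S (y :: xs)) (k : ℕ) : (powerShortComplex y xs k).ShortExact := by
  have hmono : Function.Injective (y ^ k • · : S ⧸ powerIdeal xs k → S ⧸ powerIdeal xs k) := by
    have := h.2 k
    rwa [smul_eq_mul, Ideal.mul_top] at this
  refine @ShortComplex.ShortExact.mk _ _ _ _ ?_ ((ModuleCat.mono_iff_injective _).2 hmono) ?_
  · rw [ShortComplex.moduleCat_exact_iff]
    intro x hx
    obtain ⟨x, rfl⟩ := Submodule.Quotient.mk_surjective _ x
    have hx : x ∈ powerIdeal (y :: xs) k := (Submodule.Quotient.mk_eq_zero _).1 hx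
    rw [powerIdeal_cons, Submodule.mem_sup] at hx
    obtain ⟨_, hu, v, hv, rfl⟩ := hx
    obtain ⟨u, rfl⟩ := Ideal.mem_span_singleton'.1 hu
    refine ⟨Submodule.Quotient.mk u, (Submodule.Quotient.eq (powerIdeal xs k)).2 ?_⟩
    change y ^ k • u - (u * y ^ k + v) ∈ powerIdeal xs k
    rw [smul_eq_mul, mul_comm, sub_add_cancel_left]
    exact neg_mem hv
  · rw [ModuleCat.epi_iff_surjective]
    exact Submodule.factor_surjective (powerIdeal_le_cons y xs k)

theorem smul_id_comp {N X : ModuleCat.{u} S} (r : S) {i : ℕ} (x : Ext N X i) :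
    (Ext.mk₀ (r • 𝟙 N)).comp x (zero_add i) = r • x := by
  rw [Ext.mk₀_smul, Ext.smul_comp, Ext.mk₀_id_comp]

theorem smul_comp_cyclicMap_eq_zero (y : S) (xs : List S) (k : ℕ) {N : ModuleCat.{u} S} {i : ℕ}
    (x : Ext (ModuleCat.of S (S ⧸ powerIdeal (y :: xs) k)) N i) :
    y ^ k • (Ext.mk₀ (cyclicMap (powerIdeal_le_cons y xs k))).comp x (zero_add i) = 0 := by
  rw [← smul_id_comp, Ext.mk₀_comp_mk₀_assoc, (powerShortComplex y xs k).zero, Ext.mk₀_zero,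
    Ext.zero_comp]

/-- For `I = 0`, the identification of `N` with `Ext⁰(S ⧸ I, N)`. -/
noncomputable def extZeroEquiv {I : Ideal S} (hI : I = ⊥) (N : ModuleCat.{u} S) :
    N ≃ₗ[S] Ext (ModuleCat.of S (S ⧸ I)) N 0 :=
  (LinearMap.ringLmapEquivSelf S S N).symm ≪≫ₗ
    (Submodule.quotEquivOfEqBot I hI).symm.congrLeft N S ≪≫ₗ
    (ModuleCat.homLinearEquiv (M := ModuleCat.of S (S ⧸ I)) (N := N) (S := S)).symm ≪≫ₗ
    Ext.linearEquiv₀.symm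

theorem projective_of_eq_bot {I : Ideal S} (hI : I = ⊥) :
    Projective (ModuleCat.of S (S ⧸ I)) := by
  have : Module.Free S (S ⧸ I) := Module.Free.of_equiv (Submodule.quotEquivOfEqBot I hI).symm
  exact (IsProjective.iff_projective (S ⧸ I)).1 inferInstance

end PowerRegular

section TopExt

open CategoryTheory Abelian

universe u

variable {S : Type u} [CommRing S] {xs : List S} {y : S}

/-- The map sending `m` to the class of the Koszul extension of `S ⧸ (x₁ᵏ, …, xₙᵏ)` by `S`, pushed
out along `1 ↦ m`. -/
noncomputable def topClass : {xs : List S} → IsPowerRegular S xs → (k : ℕ) →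
    (N : ModuleCat.{u} S) → N →ₗ[S] Ext (ModuleCat.of S (S ⧸ powerIdeal xs k)) N xs.length
  | [], _, k, N => (extZeroEquiv (powerIdeal_nil k) N).toLinearMap
  | _ :: _, h, k, N => ((h.powerShortComplex_shortExact k).extClass.precompOfLinear S N
      (add_comm _ _)) ∘ₗ topClass h.1 k N

theorem topClass_cons (h : IsPowerRegular S (y :: xs)) (k : ℕ) (N : ModuleCat.{u} S) (m : N) :
    topClass h k N m =
      (h.powerShortComplex_shortExact k).extClass.comp (topClass h.1 k N m) (add_comm _ _) :=
  rfl

namespace IsPowerRegular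

theorem subsingleton_ext_of_length_lt (h : IsPowerRegular S xs) (k : ℕ) (N : ModuleCat.{u} S)
    {i : ℕ} (hi : xs.length < i) :
    Subsingleton (Ext (ModuleCat.of S (S ⧸ powerIdeal xs k)) N i) := by
  obtain ⟨i, rfl⟩ := Nat.exists_eq_add_one_of_ne_zero (Nat.ne_zero_of_lt hi)
  induction xs generalizing i with
  | nil =>
    have := projective_of_eq_bot (powerIdeal_nil (S := S) k)
    exact Ext.subsingleton_of_projective _ _ _
  | cons y xs ih =>
    rw [List.length_cons, Nat.succ_lt_succ_iff] at hi
    obtain ⟨i, rfl⟩ := Nat.exists_eq_add_one_of_ne_zero (Nat.ne_zero_of_lt hi)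
    have := ih h.1 i hi
    have := ih h.1 (i + 1) (hi.trans (Nat.lt_succ_self _))
    refine subsingleton_of_forall_eq 0 fun x => ?_
    obtain ⟨x, rfl⟩ := Ext.contravariant_sequence_exact₃ (h.powerShortComplex_shortExact k) N x
      (Subsingleton.elim _ _) (add_comm 1 _)
    rw [Subsingleton.elim x 0, Ext.comp_zero]

end IsPowerRegular

theorem topClass_comp_mk₀ (h : IsPowerRegular S xs) (k : ℕ) {N N' : ModuleCat.{u} S} (f : N ⟶ N')
    (m : N) : (topClass h k N m).comp (Ext.mk₀ f) (add_zero _) = topClass h k N' (f.hom m) := by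
  induction xs with
  | nil =>
    refine (Ext.mk₀_comp_mk₀ _ _).trans (congrArg Ext.mk₀ ?_)
    ext
    exact map_smul f.hom _ m
  | cons y xs ih =>
    rw [topClass_cons, topClass_cons, ← ih h.1]
    exact Ext.comp_assoc_of_third_deg_zero _ _ _ _

theorem topClass_surjective (h : IsPowerRegular S xs) (k : ℕ) (N : ModuleCat.{u} S) :
    Function.Surjective (topClass h k N) := by
  induction xs with
  | nil => exact (extZeroEquiv _ N).surjective
  | cons y xs ih =>
    intro x
    have := h.1.subsingleton_ext_of_length_lt k N (Nat.lt_succ_self xs.length)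
    obtain ⟨x, rfl⟩ := Ext.contravariant_sequence_exact₃ (h.powerShortComplex_shortExact k) N x
      (Subsingleton.elim _ _) (add_comm 1 xs.length)
    obtain ⟨m, rfl⟩ := ih h.1 x
    exact ⟨m, topClass_cons h k N m⟩

theorem topClass_eq_zero_iff (h : IsPowerRegular S xs) (k : ℕ) (N : ModuleCat.{u} S) (m : N) :
    topClass h k N m = 0 ↔ m ∈ powerIdeal xs k • (⊤ : Submodule S N) := by
  induction xs generalizing m with
  | nil =>
    refine (extZeroEquiv (powerIdeal_nil k) N).map_eq_zero_iff.trans ?_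
    rw [powerIdeal_nil, Submodule.bot_smul, Submodule.mem_bot]
  | cons y xs ih =>
    have hexact := h.powerShortComplex_shortExact k
    have hrange : topClass h k N m = 0 ↔ ∃ m' : N, topClass h.1 k N (y ^ k • m') =
        topClass h.1 k N m := by
      simp only [map_smul, ← smul_id_comp]
      constructor
      · intro hm
        obtain ⟨x, hx⟩ := Ext.contravariant_sequence_exact₁ hexact N _ (add_comm 1 _) hm
        obtain ⟨m', rfl⟩ := topClass_surjective h.1 k N x
        exact ⟨m', hx⟩
      · rintro ⟨m', hm'⟩
        rw [topClass_cons, ← hm']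
        refine (Ext.comp_assoc_of_second_deg_zero _ _ _ (add_comm _ _)).symm.trans ?_
        rw [hexact.extClass_comp, Ext.zero_comp]
    rw [hrange, powerIdeal_cons, Submodule.sup_smul, Submodule.mem_sup,
      Submodule.ideal_span_singleton_smul]
    simp only [Submodule.mem_smul_pointwise_iff_exists, Submodule.mem_top, true_and,
      exists_exists_eq_and]
    refine exists_congr fun m' => ⟨fun hm' => ⟨m - y ^ k • m', (ih h.1 _).1 ?_, by abel⟩, ?_⟩
    · rw [map_sub, hm', sub_self]
    · rintro ⟨v, hv, rfl⟩
      rw [map_add, (ih h.1 v).2 hv, add_zero]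

theorem extTransition_topClass (h : IsPowerRegular S xs) {k l : ℕ} (hkl : k ≤ l)
    (N : ModuleCat.{u} S) (m : N) :
    extTransition (powerIdeal_antitone xs) xs.length N k l hkl (topClass h k N m) =
      topClass h l N (xs.prod ^ (l - k) • m) := by
  induction xs with
  | nil =>
    rw [List.prod_nil, one_pow, one_smul]
    refine (Ext.mk₀_comp_mk₀ _ _).trans (congrArg Ext.mk₀ ?_)
    ext
    rfl
  | cons y xs ih =>
    let F : powerShortComplex y xs l ⟶ powerShortComplex y xs k := ShortComplex.homMk
      (y ^ (l - k) • cyclicMap (powerIdeal_antitone xs hkl))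
      (cyclicMap (powerIdeal_antitone xs hkl)) (cyclicMap (powerIdeal_antitone (y :: xs) hkl))
      (by simp [smul_smul, ← pow_add, hkl]) ((cyclicMap_comp _ _).trans (cyclicMap_comp _ _).symm)
    have hF := ShortComplex.ShortExact.extClass_naturality
      (h.powerShortComplex_shortExact l) (h.powerShortComplex_shortExact k) F
    rw [topClass_cons, topClass_cons, List.prod_cons, mul_pow, mul_smul, map_smul, ← ih h.1,
      extTransition_apply, extTransition_apply, ← Ext.smul_comp, ← Ext.mk₀_smul]
    refine (Ext.comp_assoc _ _ _ (zero_add 1) _ (by rw [zero_add, add_comm]; rfl)).symm.trans ?_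
    refine (congrArg (Ext.comp · _ _) hF.symm).trans ?_
    exact Ext.comp_assoc_of_second_deg_zero _ _ _ _

end TopExt

section ExtVanishing

open CategoryTheory Abelian

universe u

variable {S : Type u} [CommRing S] {xs : List S}

theorem IsPowerRegular.smul_topExt_injective {y : S} (h : IsPowerRegular S xs) (k : ℕ)
    {N : ModuleCat.{u} S} (hN : IsPowerRegular N (y :: xs))
    {x : Ext (ModuleCat.of S (S ⧸ powerIdeal xs k)) N xs.length} (hx : y ^ k • x = 0) : x = 0 := by
  obtain ⟨m, rfl⟩ := topClass_surjective h k N x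
  rw [← map_smul, topClass_eq_zero_iff] at hx
  exact (topClass_eq_zero_iff h k N m).2 (hN.mem_of_smul_mem hx)

theorem IsPowerRegular.subsingleton_ext_of_lt_length (h : IsPowerRegular S xs) (k : ℕ)
    {N : ModuleCat.{u} S} (hN : IsPowerRegular N xs) {i : ℕ} (hi : i < xs.length) :
    Subsingleton (Ext (ModuleCat.of S (S ⧸ powerIdeal xs k)) N i) := by
  induction xs generalizing i with
  | nil => exact absurd hi (Nat.not_lt_zero i)
  | cons y xs ih =>
    have hexact := h.powerShortComplex_shortExact k
    have hregular : ∀ x : Ext (ModuleCat.of S (S ⧸ powerIdeal xs k)) N i,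
        y ^ k • x = 0 → x = 0 := by
      intro x hx
      obtain hi | rfl := (Nat.lt_succ_iff.1 hi).lt_or_eq
      · have := ih h.1 hN.1 hi
        exact Subsingleton.elim x 0
      · exact h.1.smul_topExt_injective k hN hx
    refine subsingleton_of_forall_eq 0 fun x => ?_
    have hx := hregular _ (smul_comp_cyclicMap_eq_zero y xs k x)
    cases i with
    | zero =>
      have := hexact.epi_g
      exact Ext.precomp_mk₀_injective_of_epi N (powerShortComplex y xs k).g
        (hx.trans (Ext.comp_zero _ _ _ _ (zero_add 0)).symm)
    | succ i =>
      obtain ⟨z, rfl⟩ := Ext.contravariant_sequence_exact₃ hexact N x hx (add_comm 1 i)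
      have := ih h.1 hN.1 (Nat.lt_of_succ_lt_succ hi)
      rw [Subsingleton.elim z 0, Ext.comp_zero]

/-- Every element of `N` is fixed by some element of the ideal `J`. For finitely generated `N` this
means `N = J N`, but unlike the latter the condition passes to extensions and `Ext` modules. -/
def FixedByIdeal (J : Ideal S) (N : Type*) [AddCommGroup N] [Module S N] : Prop :=
  ∀ m : N, ∃ s ∈ J, s • m = m

namespace FixedByIdeal

variable {J : Ideal S} {N N' N'' : Type*} [AddCommGroup N] [Module S N] [AddCommGroup N']
  [Module S N'] [AddCommGroup N''] [Module S N'']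

theorem of_subsingleton [Subsingleton N] : FixedByIdeal J N := fun _ =>
  ⟨0, J.zero_mem, Subsingleton.elim _ _⟩

theorem of_surjective {f : N →ₗ[S] N'} (hf : Function.Surjective f) (hN : FixedByIdeal J N) :
    FixedByIdeal J N' := by
  intro m'
  obtain ⟨m, rfl⟩ := hf m'
  obtain ⟨s, hs, hm⟩ := hN m
  exact ⟨s, hs, by rw [← map_smul, hm]⟩

theorem of_exact {f : N →ₗ[S] N'} {g : N' →ₗ[S] N''} (hexact : Function.Exact f g)
    (hN : FixedByIdeal J N) (hN'' : FixedByIdeal J N'') : FixedByIdeal J N' := by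
  intro m
  obtain ⟨s, hs, hm⟩ := hN'' (g m)
  obtain ⟨n, hn⟩ := (hexact (m - s • m)).1 (by rw [map_sub, map_smul, hm, sub_self])
  obtain ⟨t, ht, htn⟩ := hN n
  have htm : t • (m - s • m) = m - s • m := by rw [← hn, ← map_smul, htn]
  refine ⟨s + t - t * s, J.sub_mem (J.add_mem hs ht) (J.mul_mem_left t hs), ?_⟩
  rw [smul_sub] at htm
  rw [sub_smul, add_smul, mul_smul, add_sub_assoc, htm, add_sub_cancel]

theorem ext {N : ModuleCat.{u} S} (h : IsPowerRegular S xs) (hN : FixedByIdeal J N) (k i : ℕ) :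
    FixedByIdeal J (Ext (ModuleCat.of S (S ⧸ powerIdeal xs k)) N i) := by
  induction xs generalizing i with
  | nil =>
    cases i with
    | zero => exact hN.of_surjective (extZeroEquiv (powerIdeal_nil k) N).surjective
    | succ i =>
      have := h.subsingleton_ext_of_length_lt k N i.succ_pos
      exact of_subsingleton
  | cons y xs ih =>
    have hexact := h.powerShortComplex_shortExact k
    cases i with
    | zero =>
      have := hexact.epi_g
      have hinj := Ext.precomp_mk₀_injective_of_epi N (powerShortComplex y xs k).g
      exact of_exact (f := (0 : PUnit →ₗ[S] _))
        (g := (Ext.mk₀ (powerShortComplex y xs k).g).precompOfLinear S N (zero_add 0))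
        ((LinearMap.exact_zero_iff_injective _ _).2 hinj) of_subsingleton (ih h.1 0)
    | succ i =>
      refine of_exact (f := hexact.extClass.precompOfLinear S N (add_comm 1 i))
        (g := (Ext.mk₀ (powerShortComplex y xs k).g).precompOfLinear S N (zero_add _))
        (fun x => ⟨fun hx => Ext.contravariant_sequence_exact₃ hexact N x hx
          (add_comm 1 i), ?_⟩)
        (ih h.1 i) (ih h.1 (i + 1))
      rintro ⟨x, rfl⟩
      refine (Ext.comp_assoc _ _ _ (zero_add 1) (add_comm 1 i) (by lia)).symm.trans ?_
      exact (congrArg (Ext.comp · _ _) hexact.comp_extClass).trans (Ext.zero_comp ..)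

theorem subsingleton_ext {N : ModuleCat.{u} S} (h : IsPowerRegular S xs)
    (hN : FixedByIdeal (Ideal.ofList xs) N) (k i : ℕ) :
    Subsingleton (Ext (ModuleCat.of S (S ⧸ powerIdeal xs k)) N i) := by
  refine subsingleton_of_forall_eq 0 fun x => ?_
  obtain ⟨s, hs, hsx⟩ := hN.ext h k i x
  obtain ⟨l, hl⟩ := exists_pow_le_powerIdeal xs k
  have hpow : ∀ l, s ^ l • x = x := fun l => by
    induction l with
    | zero => rw [pow_zero, one_smul]
    | succ l ih => rw [pow_succ, mul_smul, hsx, ih]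
  have hzero : s ^ l • 𝟙 (ModuleCat.of S (S ⧸ powerIdeal xs k)) = 0 := by
    ext
    refine (Submodule.Quotient.mk_eq_zero (powerIdeal xs k) (x := s ^ l • (1 : S))).2 ?_
    exact Ideal.mul_mem_right _ _ (hl (Ideal.pow_mem_pow hs l))
  rw [← hpow l, ← smul_id_comp, hzero, Ext.mk₀_zero, Ext.zero_comp]

end FixedByIdeal

end ExtVanishing

section InverseMonomialSystem

variable {R D : Type*} [CommRing R] [AddCommGroup D] [Module R D] {xs : List R} {u : ℕ → D}

theorem mem_torsionOf_smul_top {F : Type*} [AddCommGroup F] [Module R F] [Module.Flat R F] {x : F}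
    {d : D} (h : x ⊗ₜ[R] d = 0) : x ∈ Ideal.torsionOf R D d • (⊤ : Submodule R F) := by
  let f : R ⧸ Ideal.torsionOf R D d →ₗ[R] D :=
    Submodule.liftQ _ (LinearMap.toSpanSingleton R D d) le_rfl
  have hf : Function.Injective f := LinearMap.ker_eq_bot.1 (Submodule.ker_liftQ_eq_bot _ _ _ le_rfl)
  have hx : x ⊗ₜ[R] (1 : R ⧸ Ideal.torsionOf R D d) = 0 := by
    refine Module.Flat.lTensor_preserves_injective_linearMap f hf ?_
    rw [map_zero, LinearMap.lTensor_tmul, ← h]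
    exact congrArg _ (one_smul R d)
  rw [← Submodule.Quotient.mk_eq_zero, ← TensorProduct.quotTensorEquivQuotSMul_mk_one_tmul,
    ← TensorProduct.comm_tmul, hx, map_zero, map_zero]

/-- An `R`-module generated by elements `u k` which behave like the inverse monomials
`(x₁ ⋯ xₙ)⁻ᵏ` in the top local cohomology `colim R ⧸ (x₁ᵏ, …, xₙᵏ)` of `R`. -/
structure IsInverseMonomialSystem (xs : List R) (u : ℕ → D) : Prop where
  prod_smul (k : ℕ) : xs.prod • u (k + 1) = u k
  torsionOf_eq (k : ℕ) : Ideal.torsionOf R D (u k) = powerIdeal xs k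
  exists_smul_eq (d : D) : ∃ k, ∃ r : R, r • u k = d

namespace IsInverseMonomialSystem

theorem prod_pow_smul (hu : IsInverseMonomialSystem xs u) {k l : ℕ} (h : k ≤ l) :
    xs.prod ^ (l - k) • u l = u k := by
  induction l, h using Nat.le_induction with
  | base => rw [Nat.sub_self, pow_zero, one_smul]
  | succ l h ih => rw [Nat.succ_sub h, pow_succ, mul_smul, hu.prod_smul, ih]

variable {N : Type*} [AddCommGroup N] [Module R N]

theorem prod_pow_smul_tmul (hu : IsInverseMonomialSystem xs u) {k l : ℕ} (h : k ≤ l) (m : N) :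
    (xs.prod ^ (l - k) • m) ⊗ₜ[R] u l = m ⊗ₜ u k := by
  rw [TensorProduct.smul_tmul, hu.prod_pow_smul h]

theorem exists_tmul_eq (hu : IsInverseMonomialSystem xs u) (z : N ⊗[R] D) :
    ∃ k, ∃ m : N, m ⊗ₜ u k = z := by
  induction z with
  | zero => exact ⟨0, 0, TensorProduct.zero_tmul _ _⟩
  | tmul m d =>
    obtain ⟨k, r, rfl⟩ := hu.exists_smul_eq d
    exact ⟨k, r • m, TensorProduct.smul_tmul _ _ _⟩
  | add x y hx hy =>
    obtain ⟨k, m, rfl⟩ := hx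
    obtain ⟨l, m', rfl⟩ := hy
    refine ⟨max k l, xs.prod ^ (max k l - k) • m + xs.prod ^ (max k l - l) • m', ?_⟩
    rw [TensorProduct.add_tmul, hu.prod_pow_smul_tmul (le_max_left k l),
      hu.prod_pow_smul_tmul (le_max_right k l)]

theorem exists_prod_pow_smul_mem (hu : IsInverseMonomialSystem xs u) {k : ℕ} {m : N}
    (hm : m ⊗ₜ[R] u k = 0) :
    ∃ l, k ≤ l ∧ xs.prod ^ (l - k) • m ∈ powerIdeal xs l • (⊤ : Submodule R N) := by
  obtain ⟨F, _, _, _, p, hp⟩ : ∃ (F : Type _) (_ : AddCommGroup F) (_ : Module R F)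
      (_ : Module.Flat R F) (p : F →ₗ[R] N), Function.Surjective p :=
    ⟨N →₀ R, _, _, inferInstance, _, Finsupp.linearCombination_id_surjective R N⟩
  obtain ⟨x, rfl⟩ := hp m
  obtain ⟨w, hw⟩ := (rTensor_exact D (LinearMap.exact_subtype_ker_map p) hp (x ⊗ₜ u k)).1 hm
  obtain ⟨j, κ, rfl⟩ := hu.exists_tmul_eq w
  rw [LinearMap.rTensor_tmul, Submodule.subtype_apply] at hw
  have hx : (xs.prod ^ (max k j - k) • x - xs.prod ^ (max k j - j) • (κ : F)) ⊗ₜ[R]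
      u (max k j) = 0 := by
    rw [TensorProduct.sub_tmul, hu.prod_pow_smul_tmul (le_max_left k j),
      hu.prod_pow_smul_tmul (le_max_right k j), ← hw, sub_self]
  have hmem := Submodule.mem_map_of_mem (f := p) (mem_torsionOf_smul_top hx)
  rw [Submodule.map_smul'', hu.torsionOf_eq, map_sub, map_smul, map_smul, LinearMap.mem_ker.1 κ.2,
    smul_zero, sub_zero, Submodule.map_top, LinearMap.range_eq_top.2 hp] at hmem
  exact ⟨max k j, le_max_left k j, hmem⟩

end IsInverseMonomialSystem

end InverseMonomialSystem

section TopCohomology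

open CategoryTheory Abelian

universe u

variable {R : Type*} [CommRing R] {S : Type u} [CommRing S] [Algebra R S] {D : Type*}
  [AddCommGroup D] [Module R D] {xs : List R} {u : ℕ → D}

theorem powerIdeal_smul_top_le {N : Type*} [AddCommGroup N] [Module S N] [Module R N]
    [IsScalarTower R S N] (xs : List R) (k : ℕ) :
    powerIdeal xs k • (⊤ : Submodule R N) ≤
      (powerIdeal (xs.map (algebraMap R S)) k • (⊤ : Submodule S N)).restrictScalars R := by
  rw [Submodule.smul_le, powerIdeal_map]
  intro r hr m _
  rw [← algebraMap_smul S r m]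
  have hr := Ideal.mem_map_of_mem (algebraMap R S) hr
  exact Submodule.smul_mem_smul (N := (⊤ : Submodule S N)) hr Submodule.mem_top

theorem IsInverseMonomialSystem.tmul_eq_zero (hu : IsInverseMonomialSystem xs u) {N : Type*}
    [AddCommGroup N] [Module S N] [Module R N] [IsScalarTower R S N] (k : ℕ) {m : N}
    (hm : m ∈ powerIdeal (xs.map (algebraMap R S)) k • (⊤ : Submodule S N)) :
    m ⊗ₜ[R] u k = 0 := by
  let f : N →ₗ[S] N ⊗[R] D := (TensorProduct.AlgebraTensorModule.mk R S N D).flip (u k)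
  have hf : powerIdeal (xs.map (algebraMap R S)) k ≤ (LinearMap.range f).annihilator := by
    rw [powerIdeal_map, Ideal.map_le_iff_le_comap]
    intro r hr
    rw [Ideal.mem_comap, Submodule.mem_annihilator]
    rintro _ ⟨n, rfl⟩
    rw [← hu.torsionOf_eq, Ideal.mem_torsionOf_iff] at hr
    rw [algebraMap_smul]
    change r • (n ⊗ₜ[R] u k) = 0
    rw [← TensorProduct.tmul_smul, hr, TensorProduct.tmul_zero]
  have hker : powerIdeal (xs.map (algebraMap R S)) k • (⊤ : Submodule S N) ≤ LinearMap.ker f :=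
    Submodule.smul_le.2 fun s hs n _ => by
      rw [LinearMap.mem_ker, map_smul]
      exact Submodule.mem_annihilator.1 (hf hs) _ ⟨n, rfl⟩
  exact hker hm

variable (h : IsPowerRegular S (xs.map (algebraMap R S))) (hu : IsInverseMonomialSystem xs u)
  (N : ModuleCat.{u} S) [Module R N] [IsScalarTower R S N]

/-- The map `Extⁿ(S ⧸ (x₁ᵏ, …, xₙᵏ), N) → N ⊗ D` sending `topClass m` to `m ⊗ u k`. -/
noncomputable def topClassDesc (k : ℕ) :
    Ext (ModuleCat.of S (S ⧸ powerIdeal (xs.map (algebraMap R S)) k)) N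
      (xs.map (algebraMap R S)).length →ₗ[S] N ⊗[R] D :=
  (LinearMap.ker (topClass h k N)).liftQ ((TensorProduct.AlgebraTensorModule.mk R S N D).flip (u k))
      (fun m hm => hu.tmul_eq_zero k ((topClass_eq_zero_iff h k N m).1 hm)) ∘ₗ
    ((topClass h k N).quotKerEquivOfSurjective (topClass_surjective h k N)).symm

theorem topClassDesc_topClass (k : ℕ) (m : N) :
    topClassDesc h hu N k (topClass h k N m) = m ⊗ₜ u k := by
  have hm : ((topClass h k N).quotKerEquivOfSurjective (topClass_surjective h k N)).symm
      (topClass h k N m) = Submodule.Quotient.mk m :=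
    (LinearEquiv.symm_apply_eq _).2 rfl
  rw [topClassDesc, LinearMap.comp_apply, LinearEquiv.coe_coe, hm]
  rfl

theorem topClassDesc_extTransition {k l : ℕ} (hkl : k ≤ l)
    (x : Ext (ModuleCat.of S (S ⧸ powerIdeal (xs.map (algebraMap R S)) k)) N
      (xs.map (algebraMap R S)).length) :
    topClassDesc h hu N l (extTransition (powerIdeal_antitone _) _ N k l hkl x) =
      topClassDesc h hu N k x := by
  obtain ⟨m, rfl⟩ := topClass_surjective h k N x
  rw [extTransition_topClass, topClassDesc_topClass, topClassDesc_topClass, ← map_list_prod,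
    ← map_pow, algebraMap_smul, hu.prod_pow_smul_tmul hkl]

/-- The comparison map from the top local cohomology `colim Extⁿ(S ⧸ (x₁ᵏ, …, xₙᵏ), N)` to the
tensor product of `N` with the module of inverse monomials. -/
noncomputable def topLimitMap :
    ExtLimit (powerIdeal_antitone (xs.map (algebraMap R S))) (xs.map (algebraMap R S)).length N
      →ₗ[S] N ⊗[R] D :=
  Module.DirectLimit.lift S ℕ _ _ (topClassDesc h hu N)
    fun _ _ hkl x => topClassDesc_extTransition h hu N hkl x

theorem topLimitMap_of_topClass (k : ℕ) (m : N) :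
    topLimitMap h hu N (Module.DirectLimit.of S ℕ _ _ k (topClass h k N m)) = m ⊗ₜ u k :=
  (Module.DirectLimit.lift_of _ _ _).trans (topClassDesc_topClass h hu N k m)

theorem topLimitMap_bijective : Function.Bijective (topLimitMap h hu N) := by
  constructor
  · rw [injective_iff_map_eq_zero]
    intro z hz
    obtain ⟨k, x, rfl⟩ := Module.DirectLimit.exists_of z
    obtain ⟨m, rfl⟩ := topClass_surjective h k N x
    rw [topLimitMap_of_topClass] at hz
    obtain ⟨l, hkl, hl⟩ := hu.exists_prod_pow_smul_mem hz
    have hl : xs.prod ^ (l - k) • m ∈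
        powerIdeal (xs.map (algebraMap R S)) l • (⊤ : Submodule S N) :=
      powerIdeal_smul_top_le xs l hl
    rw [← algebraMap_smul S (xs.prod ^ (l - k)) m, map_pow, map_list_prod] at hl
    rw [← Module.DirectLimit.of_f (hij := hkl), extTransition_topClass,
      (topClass_eq_zero_iff h l N _).2 hl, map_zero]
  · intro z
    obtain ⟨k, m, rfl⟩ := hu.exists_tmul_eq z
    exact ⟨_, topLimitMap_of_topClass h hu N k m⟩

theorem topLimitMap_map {N N' : ModuleCat.{u} S} [Module R N] [IsScalarTower R S N] [Module R N']
    [IsScalarTower R S N'] (f : N ⟶ N') (z : ExtLimit _ _ N) :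
    topLimitMap h hu N' (ExtLimit.map _ _ f z) =
      TensorProduct.AlgebraTensorModule.rTensor R D f.hom (topLimitMap h hu N z) := by
  obtain ⟨k, x, rfl⟩ := Module.DirectLimit.exists_of z
  obtain ⟨m, rfl⟩ := topClass_surjective h k N x
  rw [topLimitMap_of_topClass, TensorProduct.AlgebraTensorModule.rTensor_tmul,
    ← topLimitMap_of_topClass h, ← topClass_comp_mk₀]
  exact congrArg _ (Module.DirectLimit.map_apply_of _ _ _)

end TopCohomology

section DimensionShift

open CategoryTheory Abelian

universe u

variable {S : Type u} [CommRing S] {xs : List S} {i : ℕ}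

theorem IsPowerRegular.subsingleton_extLimit_of_length_lt (h : IsPowerRegular S xs)
    (N : ModuleCat.{u} S) (hi : xs.length < i) :
    Subsingleton (ExtLimit (powerIdeal_antitone xs) i N) :=
  have := fun k => h.subsingleton_ext_of_length_lt k N hi
  subsingleton_directLimit

theorem IsPowerRegular.subsingleton_extLimit_of_lt_length (h : IsPowerRegular S xs)
    {N : ModuleCat.{u} S} (hN : IsPowerRegular N xs) (hi : i < xs.length) :
    Subsingleton (ExtLimit (powerIdeal_antitone xs) i N) :=
  have := fun k => h.subsingleton_ext_of_lt_length k hN hi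
  subsingleton_directLimit

theorem FixedByIdeal.subsingleton_extLimit {N : ModuleCat.{u} S} (h : IsPowerRegular S xs)
    (hN : FixedByIdeal (Ideal.ofList xs) N) (i : ℕ) :
    Subsingleton (ExtLimit (powerIdeal_antitone xs) i N) :=
  have := fun k => hN.subsingleton_ext h k i
  subsingleton_directLimit

theorem ExtLimit.map_comp {a : ℕ → Ideal S} (ha : Antitone a) (i : ℕ) {N N' N'' : ModuleCat.{u} S}
    (f : N ⟶ N') (f' : N' ⟶ N'') : map ha i (f ≫ f') = map ha i f' ∘ₗ map ha i f := by
  refine LinearMap.ext fun z => ?_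
  obtain ⟨k, x, rfl⟩ := Module.DirectLimit.exists_of z
  simp only [map, LinearMap.comp_apply, Module.DirectLimit.map_apply_of]
  refine congrArg _ (Eq.trans ?_ (Ext.comp_assoc_of_third_deg_zero _ _ _ (by lia)).symm)
  exact congrArg (x.comp · (add_zero i)) (Ext.mk₀_comp_mk₀ f f').symm

variable {X F M : ModuleCat.{u} S}

theorem ExtLimit.map_bijective_of_fixedByIdeal (h : IsPowerRegular S xs)
    {T : ShortComplex (ModuleCat.{u} S)} (hT : T.ShortExact)
    (hfixed : FixedByIdeal (Ideal.ofList xs) T.X₁) (i : ℕ) :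
    Function.Bijective (map (powerIdeal_antitone xs) i T.g) := by
  have hzero := hfixed.subsingleton_extLimit h i
  have hzero' := hfixed.subsingleton_extLimit h (i + 1)
  refine ⟨(injective_iff_map_eq_zero _).2 fun z hz => ?_, fun z => ?_⟩
  · obtain ⟨w, rfl⟩ := (exact_map_map _ i hT z).1 hz
    rw [Subsingleton.elim w 0, map_zero]
  · exact (exact_map_connecting _ i hT z).1 (Subsingleton.elim _ _)

theorem ExtLimit.nonempty_equiv_ker_map (h : IsPowerRegular S xs) {j : X ⟶ F} {q : F ⟶ M}
    (hjq : Function.Exact j q) (hq : Function.Surjective q) (hF : IsPowerRegular F xs)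
    (hfixed : FixedByIdeal (Ideal.ofList xs) (LinearMap.ker j.hom)) (hi : i < xs.length) :
    Nonempty (ExtLimit (powerIdeal_antitone xs) i M ≃ₗ[S]
      LinearMap.ker (map (powerIdeal_antitone xs) (i + 1) j)) := by
  let π : X ⟶ ModuleCat.of S (LinearMap.range j.hom) := ModuleCat.ofHom j.hom.rangeRestrict
  let ι : ModuleCat.of S (LinearMap.range j.hom) ⟶ F := ModuleCat.ofHom (Submodule.subtype _)
  have hT := ModuleCat.shortComplex_shortExact
    (ShortComplex.mk (ModuleCat.ofHom (LinearMap.ker j.hom).subtype) π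
      (ModuleCat.hom_ext (LinearMap.ext fun x => Subtype.ext x.2)))
    (fun x => by simp [π, Subtype.ext_iff]) (Subtype.val_injective)
    j.hom.surjective_rangeRestrict
  have hU := ModuleCat.shortComplex_shortExact
    (ShortComplex.mk ι q (ModuleCat.hom_ext (LinearMap.ext fun x => (hjq _).2 x.2)))
    (fun x => by simp [ι, hjq x]) (Subtype.val_injective) hq
  have hπ := ExtLimit.map_bijective_of_fixedByIdeal h hT hfixed (i + 1)
  let δ := ExtLimit.connecting (powerIdeal_antitone xs) i hU
  have hδ : Function.Injective δ := (injective_iff_map_eq_zero _).2 fun z hz => by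
    obtain ⟨w, rfl⟩ := (ExtLimit.exact_map_connecting _ i hU z).1 hz
    rw [(h.subsingleton_extLimit_of_lt_length hF hi).elim w 0, map_zero]
  let e := LinearEquiv.ofBijective _ hπ
  have hrange : LinearMap.range (e.symm.toLinearMap ∘ₗ δ) =
      LinearMap.ker (map (powerIdeal_antitone xs) (i + 1) j) := by
    have hj : map (powerIdeal_antitone xs) (i + 1) j =
        map _ (i + 1) ι ∘ₗ map (powerIdeal_antitone xs) (i + 1) π :=
      (ExtLimit.map_comp _ _ π ι).symm ▸ rfl
    ext z
    rw [LinearMap.mem_ker, hj, LinearMap.comp_apply, ExtLimit.exact_connecting_map _ i hU]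
    exact exists_congr fun w => e.symm_apply_eq
  exact ⟨LinearEquiv.ofInjective _ (e.symm.injective.comp hδ) ≪≫ₗ LinearEquiv.ofEq _ _ hrange⟩

end DimensionShift

section PowerSeriesVariables

theorem IsPowerRegular.map_of_leftInverse {S ι : Type*} [CommRing S] {x : ι → S}
    (τ : ι → ℕ → S →+ S) (hself : ∀ j k s, τ j k (x j ^ k * s) = s)
    (hother : ∀ i j k s, i ≠ j → τ j k (x i ^ k * s) = x i ^ k * τ j k s)
    {is : List ι} (his : is.Nodup) : IsPowerRegular S (is.map x) := by
  induction is with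
  | nil => trivial
  | cons j is ih =>
    have hmem (k : ℕ) (s : S) (hs : s ∈ powerIdeal (is.map x) k) :
        τ j k s ∈ powerIdeal (is.map x) k := by
      induction hs using Submodule.closure_induction with
      | zero => simp
      | add y z _ _ hy hz => rw [map_add]; exact add_mem hy hz
      | smul_mem c y hy =>
        obtain ⟨_, hx, rfl⟩ := List.mem_map.1 hy
        obtain ⟨i, hi, rfl⟩ := List.mem_map.1 hx
        have hij : i ≠ j := fun h => his.notMem (h ▸ hi)
        rw [smul_eq_mul, mul_comm, hother i j k c hij]
        exact Ideal.mul_mem_right _ _ (pow_mem_powerIdeal hx k)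
    refine ⟨ih his.of_cons, fun k => isSMulRegular_quotient_iff_mem_of_smul_mem _ _ |>.2 ?_⟩
    intro s hs
    rw [smul_eq_mul, Ideal.mul_top] at hs ⊢
    exact hself j k s ▸ hmem k _ hs

open MvPowerSeries

variable {σ A : Type*} [CommRing A]

/-- The operator dividing by `X j ^ k` and dropping the terms not divisible by it. -/
noncomputable def divXPow (j : σ) (k : ℕ) : MvPowerSeries σ A →ₗ[A] MvPowerSeries σ A where
  toFun f m := coeff (m + Finsupp.single j k) f
  map_add' _ _ := rfl
  map_smul' _ _ := rfl

theorem coeff_divXPow (j : σ) (k : ℕ) (f : MvPowerSeries σ A) (m : σ →₀ ℕ) :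
    coeff m (divXPow j k f) = coeff (m + Finsupp.single j k) f := rfl

theorem divXPow_X_pow_mul (j : σ) (k : ℕ) (f : MvPowerSeries σ A) :
    divXPow j k (X j ^ k * f) = f := by
  ext m
  rw [coeff_divXPow, X_pow_eq, add_comm, coeff_add_monomial_mul, one_mul]

theorem divXPow_X_pow_mul_of_ne {i j : σ} (h : i ≠ j) (k : ℕ) (f : MvPowerSeries σ A) :
    divXPow j k (X i ^ k * f) = X i ^ k * divXPow j k f := by
  classical
  ext m
  have hle : Finsupp.single i k ≤ m + Finsupp.single j k ↔ Finsupp.single i k ≤ m := by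
    simp [Finsupp.single_le_iff, h.symm]
  simp only [coeff_divXPow, X_pow_eq, coeff_monomial_mul, hle]
  split_ifs with him
  · rw [tsub_add_eq_add_tsub him]
  · rfl

theorem isPowerRegular_map_X {is : List σ} (his : is.Nodup) :
    IsPowerRegular (MvPowerSeries σ A) (is.map (X (R := A))) :=
  .map_of_leftInverse (fun j k => (divXPow j k).toAddMonoidHom) divXPow_X_pow_mul
    (fun _ _ k f h => divXPow_X_pow_mul_of_ne h k f) his

theorem isPowerRegular_tensorProduct_map_X (L : Type*) [CommRing L] [Algebra A L] {is : List σ}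
    (his : is.Nodup) :
    IsPowerRegular (MvPowerSeries σ A ⊗[A] L)
      ((is.map X).map (algebraMap (MvPowerSeries σ A) (MvPowerSeries σ A ⊗[A] L))) := by
  rw [List.map_map]
  have hmul (i : σ) (k : ℕ) (f : MvPowerSeries σ A) (l : L) :
      (algebraMap (MvPowerSeries σ A) (MvPowerSeries σ A ⊗[A] L) (X i)) ^ k * f ⊗ₜ l =
        (X i ^ k * f) ⊗ₜ l := by
    rw [← map_pow, ← Algebra.smul_def, TensorProduct.smul_tmul', smul_eq_mul]
  refine .map_of_leftInverse (fun j k => ((divXPow j k).rTensor L).toAddMonoidHom)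
    (fun j k s => ?_) (fun i j k s hij => ?_) his
  · induction s with
    | zero => simp
    | add s t hs ht => rw [mul_add, map_add, hs, ht]
    | tmul f l =>
      refine (congrArg _ (hmul j k f l)).trans ?_
      exact congrArg (· ⊗ₜ l) (divXPow_X_pow_mul j k f)
  · induction s with
    | zero => simp
    | add s t hs ht => rw [mul_add, map_add, hs, ht, map_add, mul_add]
    | tmul f l =>
      refine (congrArg _ (hmul i k f l)).trans (Eq.trans ?_ (hmul i k _ l).symm)
      exact congrArg (· ⊗ₜ l) (divXPow_X_pow_mul_of_ne hij k f)

theorem mem_powerIdeal_map_X_iff {is : List σ} {k : ℕ} {f : MvPowerSeries σ A} :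
    f ∈ powerIdeal (is.map X) k ↔ ∀ m : σ →₀ ℕ, (∀ i ∈ is, m i < k) → coeff m f = 0 := by
  induction is generalizing f with
  | nil => simp [powerIdeal_nil, MvPowerSeries.ext_iff]
  | cons j is ih =>
    rw [List.map_cons, powerIdeal_cons]
    constructor
    · intro h m hm
      obtain ⟨a, ha, b, hb, rfl⟩ := Submodule.mem_sup.1 h
      rw [map_add, X_pow_dvd_iff.1 (Ideal.mem_span_singleton.1 ha) m (hm j List.mem_cons_self),
        ih.1 hb m fun i hi => hm i (List.mem_cons_of_mem _ hi), add_zero]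
    · intro h
      let b : MvPowerSeries σ A := fun m => if m j < k then coeff m f else 0
      have hb (m) : coeff m b = if m j < k then coeff m f else 0 := rfl
      rw [← sub_add_cancel f b]
      refine add_mem (Ideal.mem_sup_left <| Ideal.mem_span_singleton.2 <|
        X_pow_dvd_iff.2 fun m hm => ?_) (Ideal.mem_sup_right <| ih.2 fun m hm => ?_)
      · rw [map_sub, hb, if_pos hm, sub_self]
      · rw [hb, ite_eq_right_iff]
        exact fun hj => h m (List.forall_mem_cons.2 ⟨hj, hm⟩)

end PowerSeriesVariables

section PowerSeriesDual

open MvPowerSeries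

variable (σ A : Type*) [Fintype σ] [CommRing A]

/-- The variables of `MvPowerSeries σ A`, as a list. -/
noncomputable def variableList : List (MvPowerSeries σ A) := Finset.univ.toList.map X

variable {σ A}

theorem ofList_variableList :
    Ideal.ofList (variableList σ A) = Ideal.span (Set.range X) := by
  simp [Ideal.ofList, variableList, Set.range, eq_comm]

theorem mem_powerIdeal_variableList_iff {k : ℕ} {f : MvPowerSeries σ A} :
    f ∈ powerIdeal (variableList σ A) k ↔ ∀ m : σ →₀ ℕ, (∀ i, m i < k) → coeff m f = 0 := by
  simp [variableList, mem_powerIdeal_map_X_iff]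

variable (σ) in
/-- The exponent of the monomial `∏ i, X i ^ k`. -/
noncomputable def constExponent (k : ℕ) : σ →₀ ℕ := Finsupp.equivFunOnFinite.symm fun _ => k

theorem constExponent_apply (k : ℕ) (i : σ) : constExponent σ k i = k := rfl

theorem prod_variableList : (variableList σ A).prod = monomial (constExponent σ 1) 1 := by
  classical
  have h (s : Finset σ) :
      ∏ i ∈ s, (X i : MvPowerSeries σ A) = monomial (∑ i ∈ s, Finsupp.single i 1) 1 := by
    induction s using Finset.induction_on with
    | empty => simp
    | insert i s hi ih =>
      rw [Finset.prod_insert hi, Finset.sum_insert hi, ih, X_def, monomial_mul_monomial, one_mul]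
  rw [variableList, Finset.prod_map_toList, h]
  congr 2
  ext i
  simp [Finsupp.finsetSum_apply, Finsupp.single_apply, constExponent_apply]

theorem coeff_prod_variableList_mul (k : ℕ) (f : MvPowerSeries σ A) :
    coeff (constExponent σ (k + 1)) ((variableList σ A).prod * f) =
      coeff (constExponent σ k) f := by
  have h : constExponent σ (k + 1) = constExponent σ 1 + constExponent σ k :=
    Finsupp.ext fun _ => add_comm _ _
  rw [prod_variableList, h, coeff_add_monomial_mul, one_mul]

theorem coeff_prod_variableList_mul_eq_zero {k : ℕ} {f : MvPowerSeries σ A}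
    (hf : f ∈ powerIdeal (variableList σ A) k) :
    coeff (constExponent σ k) ((variableList σ A).prod * f) = 0 := by
  rw [prod_variableList, coeff_monomial_mul, ite_eq_right_iff, one_mul]
  refine fun hle => mem_powerIdeal_variableList_iff.1 hf _ fun i => ?_
  exact Nat.sub_lt (hle i) one_pos

variable (σ A) in
/-- The continuous functional `f ↦ coeff (k, …, k) (∏ i, X i * f)`, which plays the role of the
inverse monomial `∏ i, X i ^ (-k)`. -/
noncomputable def inverseMonomial (k : ℕ) :
    ContinuousDual A (Ideal.ofList (variableList σ A)) (MvPowerSeries σ A) :=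
  .mk (coeff (constExponent σ k) ∘ₗ LinearMap.mulLeft A (variableList σ A).prod) <| by
    obtain ⟨l, hl⟩ := exists_pow_le_powerIdeal (variableList σ A) k
    refine ⟨l, fun f hf => coeff_prod_variableList_mul_eq_zero (hl ?_)⟩
    rwa [smul_eq_mul, Ideal.mul_top] at hf

theorem inverseMonomial_apply (k : ℕ) (f : MvPowerSeries σ A) :
    inverseMonomial σ A k f = coeff (constExponent σ k) ((variableList σ A).prod * f) := rfl

theorem torsionOf_inverseMonomial (k : ℕ) :
    Ideal.torsionOf _ _ (inverseMonomial σ A k) = powerIdeal (variableList σ A) k := by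
  ext f
  rw [Ideal.mem_torsionOf_iff]
  constructor
  · rw [mem_powerIdeal_variableList_iff]
    intro hf m hm
    obtain ⟨m', hm'⟩ : ∃ m', constExponent σ k = constExponent σ 1 + (m + m') := by
      refine ⟨constExponent σ k - constExponent σ 1 - m, Finsupp.ext fun i => ?_⟩
      have := hm i
      simp only [Finsupp.add_apply, Finsupp.tsub_apply, constExponent_apply]
      lia
    have hcoeff : coeff (constExponent σ k) ((variableList σ A).prod * (f * monomial m' 1)) = 0 :=
      DFunLike.congr_fun hf (monomial m' 1)
    rwa [prod_variableList, hm', coeff_add_monomial_mul, coeff_add_mul_monomial, one_mul,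
      mul_one] at hcoeff
  · intro hf
    ext s
    exact coeff_prod_variableList_mul_eq_zero (Ideal.mul_mem_right s _ hf)

theorem linearMap_eq_zero_of_monomial {P : Type*} [AddCommGroup P] [Module A P] {k : ℕ}
    {φ : MvPowerSeries σ A →ₗ[A] P} (hφ : ∀ f ∈ powerIdeal (variableList σ A) (k + 1), φ f = 0)
    (hmonomial : ∀ m ≤ constExponent σ k, φ (monomial m 1) = 0) : φ = 0 := by
  classical
  ext f
  let t : MvPowerSeries σ A := ∑ m ∈ Finset.Iic (constExponent σ k), coeff m f • monomial m 1
  have ht : φ t = 0 := by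
    rw [map_sum]
    refine Finset.sum_eq_zero fun m hm => ?_
    rw [map_smul, hmonomial m (Finset.mem_Iic.1 hm), smul_zero]
  have hft : f - t ∈ powerIdeal (variableList σ A) (k + 1) := by
    refine mem_powerIdeal_variableList_iff.2 fun m hm => ?_
    have hm : m ∈ Finset.Iic (constExponent σ k) :=
      Finset.mem_Iic.2 fun i => Nat.lt_succ_iff.1 (hm i)
    simp [t, map_sum, coeff_monomial, Finset.sum_ite_eq, hm]
  rw [← sub_add_cancel f t, map_add, hφ _ hft, ht, add_zero, LinearMap.zero_apply]

theorem exists_smul_inverseMonomial_eq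
    (φ : ContinuousDual A (Ideal.ofList (variableList σ A)) (MvPowerSeries σ A)) :
    ∃ k, ∃ r : MvPowerSeries σ A, r • inverseMonomial σ A k = φ := by
  classical
  obtain ⟨k, hk⟩ := φ.exists_pow_smul_top
  let r : MvPowerSeries σ A := fun m =>
    if m ≤ constExponent σ k then φ (monomial (constExponent σ k - m) 1) else 0
  have hr (m) : coeff m r =
    if m ≤ constExponent σ k then φ (monomial (constExponent σ k - m) 1) else 0 := rfl
  refine ⟨k + 1, r, sub_eq_zero.1 ?_⟩
  suffices h : (r • inverseMonomial σ A (k + 1) - φ).toDual = 0 from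
    ContinuousDual.ext (LinearMap.congr_fun h)
  refine linearMap_eq_zero_of_monomial (k := k) (fun f hf => ?_) fun m hm => ?_
  · have hφ : φ f = 0 := hk f <| by
      rw [smul_eq_mul, Ideal.mul_top]
      exact Ideal.pow_le_pow_right k.le_succ (powerIdeal_le_pow _ _ hf)
    have hinv : (r • inverseMonomial σ A (k + 1)) f = 0 :=
      coeff_prod_variableList_mul_eq_zero (Ideal.mul_mem_left _ r hf)
    rw [map_sub, LinearMap.sub_apply, ContinuousDual.toDual_apply, ContinuousDual.toDual_apply,
      hφ, hinv, sub_zero]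
  · rw [map_sub, LinearMap.sub_apply, ContinuousDual.toDual_apply, ContinuousDual.toDual_apply,
      ContinuousDual.smul_apply, inverseMonomial_apply, coeff_prod_variableList_mul, smul_eq_mul,
      coeff_mul_monomial, if_pos hm, hr, if_pos tsub_le_self, tsub_tsub_cancel_of_le hm, mul_one,
      sub_self]

theorem isInverseMonomialSystem_inverseMonomial :
    IsInverseMonomialSystem (variableList σ A) (inverseMonomial σ A) where
  prod_smul k := ContinuousDual.ext fun _ => coeff_prod_variableList_mul k _
  torsionOf_eq := torsionOf_inverseMonomial
  exists_smul_eq := exists_smul_inverseMonomial_eq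

theorem finite_quotient_ofList_variableList :
    Module.Finite A (MvPowerSeries σ A ⧸ Ideal.ofList (variableList σ A)) := by
  refine .of_surjective (Algebra.linearMap A _) fun q => ?_
  obtain ⟨f, rfl⟩ := Ideal.Quotient.mk_surjective q
  refine ⟨coeff 0 f, Eq.symm <| Ideal.Quotient.eq.2 ?_⟩
  rw [← pow_one (Ideal.ofList _)]
  refine powerIdeal_le_pow _ 1 (mem_powerIdeal_variableList_iff.2 fun m hm => ?_)
  obtain rfl : m = 0 := Finsupp.ext fun i => Nat.lt_one_iff.1 (hm i)
  simp [MvPowerSeries.algebraMap_apply]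

end PowerSeriesDual

section PushoutBaseChange

open Algebra.IsPushout

universe u

variable {A L : Type*} {R S : Type u} [CommRing A] [CommRing R] [CommRing L] [CommRing S]
  [Algebra A R] [Algebra A L] [Algebra A S] [Algebra R S] [Algebra L S] [IsScalarTower A R S]
  [IsScalarTower A L S] [Algebra.IsPushout A L R S] {g : A} {I : Ideal R}
  {X Y : Type*} {Z : Type u} [AddCommGroup X] [AddCommGroup Y] [AddCommGroup Z]
  [Module R X] [Module R Y] [Module R Z] [Module A X] [Module A Y] [Module A Z]
  [IsScalarTower A R X] [IsScalarTower A R Y] [IsScalarTower A R Z]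

theorem baseChange_cancelBaseChange_symm (f : X →ₗ[R] Y) (w : L ⊗[A] X) :
    f.baseChange S ((cancelBaseChange A L R S X).symm w) =
      (cancelBaseChange A L R S Y).symm ((f.restrictScalars A).lTensor L w) := by
  induction w with
  | zero => simp only [map_zero]
  | add w w' hw hw' => simp only [map_add, hw, hw']
  | tmul l x =>
    rw [cancelBaseChange_symm_tmul, LinearMap.baseChange_tmul, LinearMap.lTensor_tmul,
      LinearMap.restrictScalars_apply, cancelBaseChange_symm_tmul]

theorem nonempty_equiv_ker_baseChange {f : X →ₗ[R] Y} (hrange : FlatAway g (LinearMap.range f))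
    (hcoker : FlatAway g (Y ⧸ LinearMap.range f)) (hg : IsUnit (algebraMap A L g)) :
    Nonempty (S ⊗[R] LinearMap.ker f ≃ₗ[S] LinearMap.ker (f.baseChange S)) := by
  let k := (LinearMap.ker f).subtype
  obtain ⟨hinj, hexact⟩ : Function.Injective ((k.restrictScalars A).lTensor L) ∧
      Function.Exact ((k.restrictScalars A).lTensor L) ((f.restrictScalars A).lTensor L) :=
    FlatAway.lTensor_injective_and_exact (k := k.restrictScalars A) (f := f.restrictScalars A)
      Subtype.val_injective (LinearMap.exact_subtype_ker_map f)
      (hrange.of_linearEquiv ((Submodule.restrictScalarsEquiv A R Y _).restrictScalars A).symm)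
      (hcoker.of_linearEquiv (Submodule.Quotient.restrictScalarsEquiv A _).symm) hg
  have hinj' : Function.Injective (k.baseChange S) := (injective_iff_map_eq_zero _).2 fun z hz => by
    obtain ⟨w, rfl⟩ := (cancelBaseChange A L R S _).symm.surjective z
    rw [baseChange_cancelBaseChange_symm, LinearEquiv.map_eq_zero_iff] at hz
    rw [hinj (hz.trans (map_zero _).symm), map_zero]
  have hrange : LinearMap.range (k.baseChange S) = LinearMap.ker (f.baseChange S) := by
    ext z
    obtain ⟨w, rfl⟩ := (cancelBaseChange A L R S _).symm.surjective z
    rw [LinearMap.mem_ker, baseChange_cancelBaseChange_symm, LinearEquiv.map_eq_zero_iff, hexact,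
      LinearMap.mem_range, (cancelBaseChange A L R S _).symm.surjective.exists]
    simp only [baseChange_cancelBaseChange_symm, EmbeddingLike.apply_eq_iff_eq]
    rfl
  exact ⟨LinearEquiv.ofInjective _ hinj' ≪≫ₗ LinearEquiv.ofEq _ _ hrange⟩

theorem fixedByIdeal_ker_baseChange [IsNoetherianRing A] [IsNoetherianRing R] [Module.Finite R Z]
    (hZ : AdicallyFlatAway g I Z) {f : X →ₗ[R] Y} {q : Y →ₗ[R] Z} (hf : Function.Injective f)
    (hq : Function.Surjective q) (hfq : Function.Exact f q) (hg : IsUnit (algebraMap A L g)) :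
    FixedByIdeal (I.map (algebraMap R S)) (LinearMap.ker (f.baseChange S)) := by
  rintro ⟨z, hz⟩
  let e := (cancelBaseChange A L R S X).restrictScalars A ≪≫ₗ TensorProduct.comm A L X
  have hsmul (r : R) (w : X ⊗[A] L) : e.symm (r • w) = r • e.symm w := by
    induction w with
    | zero => simp only [smul_zero, map_zero]
    | add w w' hw hw' => simp only [smul_add, map_add, hw, hw']
    | tmul x l =>
      change (cancelBaseChange A L R S X).symm (l ⊗ₜ (r • x)) =
        r • (cancelBaseChange A L R S X).symm (l ⊗ₜ x)
      simp only [cancelBaseChange_symm_tmul, TensorProduct.tmul_smul]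
  obtain ⟨y, rfl⟩ := e.symm.surjective z
  have hy : (f.restrictScalars A).rTensor L y = 0 := by
    have hz : f.baseChange S ((cancelBaseChange A L R S X).symm (TensorProduct.comm A X L y)) = 0 :=
      hz
    rwa [baseChange_cancelBaseChange_symm, LinearEquiv.map_eq_zero_iff,
      LinearMap.lTensor_comm, LinearEquiv.map_eq_zero_iff] at hz
  obtain ⟨k, r, hr, hrz⟩ := hZ.exists_pow_smul_eq_smul hf hq hfq hy
  obtain ⟨u, hu⟩ := hg.pow k
  refine ⟨algebraMap L S ↑u⁻¹ * algebraMap R S r,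
    Ideal.mul_mem_left _ _ (Ideal.mem_map_of_mem _ hr), Subtype.ext ?_⟩
  have hu' : algebraMap L S ↑u⁻¹ * algebraMap A S (g ^ k) = 1 := by
    rw [IsScalarTower.algebraMap_apply A L S, map_pow, ← hu, ← map_mul, u.inv_mul, map_one]
  calc
    (algebraMap L S ↑u⁻¹ * algebraMap R S r) • e.symm y
      = algebraMap L S ↑u⁻¹ • e.symm (r • y) := by
      rw [mul_smul, algebraMap_smul S r, hsmul]
    _ = (algebraMap L S ↑u⁻¹ * algebraMap A S (g ^ k)) • e.symm y := by
      rw [← hrz, map_smul, mul_smul, algebraMap_smul S (g ^ k)]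
    _ = e.symm y := by rw [hu', one_smul]

end PushoutBaseChange

section TopLimitEquiv

universe u

variable {R : Type*} {S : Type u} {D : Type*} [CommRing R] [CommRing S] [Algebra R S]
  [AddCommGroup D] [Module R D] {xs : List R} {ys : List S} {u : ℕ → D} {i : ℕ}

theorem exists_extLimit_equiv_tensorProduct (hys : xs.map (algebraMap R S) = ys)
    (h : IsPowerRegular S ys) (hu : IsInverseMonomialSystem xs u) (hi : ys.length = i) :
    ∃ e : ∀ (N : ModuleCat.{u} S) [Module R N] [IsScalarTower R S N],
        ExtLimit (powerIdeal_antitone ys) i N ≃ₗ[S] N ⊗[R] D,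
      ∀ (N N' : ModuleCat.{u} S) [Module R N] [IsScalarTower R S N] [Module R N']
        [IsScalarTower R S N'] (f : N ⟶ N') (z : ExtLimit (powerIdeal_antitone ys) i N),
        e N' (ExtLimit.map _ i f z) =
          TensorProduct.AlgebraTensorModule.rTensor R D f.hom (e N z) := by
  subst hys hi
  exact ⟨fun N => .ofBijective (topLimitMap h hu N) (topLimitMap_bijective h hu N),
    fun _ _ => topLimitMap_map h hu⟩

theorem nonempty_equiv_ker_of_apply_eq {X X' Y Y' : Type*} [AddCommMonoid X] [AddCommMonoid X']
    [AddCommMonoid Y] [AddCommMonoid Y'] [Module R X] [Module R X'] [Module R Y] [Module R Y']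
    {f : X →ₗ[R] Y} {f' : X' →ₗ[R] Y'} (e : X ≃ₗ[R] X') (e' : Y ≃ₗ[R] Y')
    (h : ∀ x, f' (e x) = e' (f x)) : Nonempty (LinearMap.ker f ≃ₗ[R] LinearMap.ker f') := by
  refine ⟨e.ofSubmodules _ _ ?_⟩
  ext x
  obtain ⟨x, rfl⟩ := e.surjective x
  simp [h]

end TopLimitEquiv

section Associativity

open TensorProduct

theorem rTensor_baseChange_assoc_symm {R S D X F : Type*} [CommRing R] [CommRing S] [Algebra R S]
    [AddCommGroup D] [Module R D] [AddCommGroup X] [Module R X] [AddCommGroup F] [Module R F]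
    (j : X →ₗ[R] F) (z : S ⊗[R] (X ⊗[R] D)) :
    AlgebraTensorModule.rTensor R D (j.baseChange S)
        ((AlgebraTensorModule.assoc R R S S X D).symm z) =
      (AlgebraTensorModule.assoc R R S S F D).symm ((j.rTensor D).baseChange S z) := by
  induction z with
  | zero => simp only [map_zero]
  | add z w hz hw => simp only [map_add, hz, hw]
  | tmul s z =>
    induction z with
    | zero => simp only [tmul_zero, map_zero]
    | add z w hz hw => simp only [tmul_add, map_add, hz, hw]
    | tmul x d => rfl

end Associativity

section ExtLimitBaseChange

open CategoryTheory

universe u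

variable {R : Type u} [CommRing R] {xs : List R} {S : Type u} [CommRing S] [Algebra R S]
  {X F M : Type u} [AddCommGroup X] [AddCommGroup F] [AddCommGroup M] [Module R X] [Module R F]
  [Module R M] {j : X →ₗ[R] F} {q : F →ₗ[R] M} {i : ℕ}

variable (xs S M i) in
/-- Passage from `M` to `S ⊗[R] M` commutes with the `i`-th local cohomology, computed along the
powers of the sequence `xs`. -/
def HasExtLimitBaseChange : Prop :=
  Nonempty (S ⊗[R] ExtLimit (powerIdeal_antitone xs) i (ModuleCat.of R M) ≃ₗ[S]
    ExtLimit (powerIdeal_antitone (xs.map (algebraMap R S))) i (ModuleCat.of S (S ⊗[R] M)))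

namespace HasExtLimitBaseChange

theorem of_length_lt (hR : IsPowerRegular R xs)
    (hS : IsPowerRegular S (xs.map (algebraMap R S))) (hi : xs.length < i) :
    HasExtLimitBaseChange xs S M i :=
  have := hR.subsingleton_extLimit_of_length_lt (ModuleCat.of R M) hi
  have := hS.subsingleton_extLimit_of_length_lt (ModuleCat.of S (S ⊗[R] M)) (by rwa [xs.length_map])
  ⟨0⟩

theorem of_eq_length {D : Type*} [AddCommGroup D] [Module R D] {u : ℕ → D}
    (hR : IsPowerRegular R xs) (hS : IsPowerRegular S (xs.map (algebraMap R S)))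
    (hu : IsInverseMonomialSystem xs u) (hi : i = xs.length) :
    HasExtLimitBaseChange xs S M i := by
  obtain ⟨eR, -⟩ := exists_extLimit_equiv_tensorProduct xs.map_id hR hu hi.symm
  obtain ⟨eS, -⟩ :=
    exists_extLimit_equiv_tensorProduct rfl hS hu ((List.length_map _).trans hi.symm)
  exact ⟨TensorProduct.AlgebraTensorModule.congr (.refl S S) (eR (.of R M)) ≪≫ₗ
    (TensorProduct.AlgebraTensorModule.assoc R R S S M D).symm ≪≫ₗ (eS (.of S (S ⊗[R] M))).symm⟩

theorem of_nonempty_equiv_ker [Module.Flat R F] (hR : IsPowerRegular R xs)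
    (hS : IsPowerRegular S (xs.map (algebraMap R S))) (hj : Function.Injective j)
    (hjq : Function.Exact j q) (hq : Function.Surjective q)
    (hfixed : FixedByIdeal ((Ideal.ofList xs).map (algebraMap R S))
      (LinearMap.ker (j.baseChange S))) (hi : i < xs.length)
    (h : Nonempty (S ⊗[R] LinearMap.ker (ExtLimit.map (powerIdeal_antitone xs) (i + 1)
        (ModuleCat.ofHom j)) ≃ₗ[S]
      LinearMap.ker (ExtLimit.map (powerIdeal_antitone (xs.map (algebraMap R S))) (i + 1)
        (ModuleCat.ofHom (j.baseChange S))))) :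
    HasExtLimitBaseChange xs S M i := by
  have hbot : Subsingleton (LinearMap.ker j) :=
    (Submodule.subsingleton_iff_eq_bot).2 (LinearMap.ker_eq_bot.2 hj)
  have hjqS : Function.Exact (j.baseChange S) (q.baseChange S) := by
    simpa only [LinearMap.baseChange_eq_ltensor] using lTensor_exact S hjq hq
  have hqS : Function.Surjective (q.baseChange S) := LinearMap.lTensor_surjective S hq
  rw [Ideal.map_ofList] at hfixed
  obtain ⟨eR⟩ := ExtLimit.nonempty_equiv_ker_map (j := ModuleCat.ofHom j) (q := ModuleCat.ofHom q)
    hR hjq hq (hR.of_flat F) (.of_subsingleton) hi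
  obtain ⟨eS⟩ := ExtLimit.nonempty_equiv_ker_map (j := ModuleCat.ofHom (j.baseChange S))
    (q := ModuleCat.ofHom (q.baseChange S)) hS hjqS hqS (hS.of_flat (S ⊗[R] F)) hfixed
    (by rwa [xs.length_map])
  obtain ⟨e⟩ := h
  exact ⟨TensorProduct.AlgebraTensorModule.congr (.refl S S) eR ≪≫ₗ e ≪≫ₗ eS.symm⟩

theorem nonempty_equiv_ker_map [Module.Flat R F] (hR : IsPowerRegular R xs)
    (hS : IsPowerRegular S (xs.map (algebraMap R S))) (h : HasExtLimitBaseChange xs S X (i + 1))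
    (hi : i + 1 < xs.length) :
    Nonempty (S ⊗[R] LinearMap.ker (ExtLimit.map (powerIdeal_antitone xs) (i + 1)
        (ModuleCat.ofHom j)) ≃ₗ[S]
      LinearMap.ker (ExtLimit.map (powerIdeal_antitone (xs.map (algebraMap R S))) (i + 1)
        (ModuleCat.ofHom (j.baseChange S)))) := by
  have := hR.subsingleton_extLimit_of_lt_length (N := .of R F) (hR.of_flat F) hi
  have := hS.subsingleton_extLimit_of_lt_length (N := .of S (S ⊗[R] F)) (hS.of_flat _)
    (by rwa [xs.length_map])
  obtain ⟨e⟩ := h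
  refine ⟨TensorProduct.AlgebraTensorModule.congr (.refl S S) (.ofTop _ ?_) ≪≫ₗ e ≪≫ₗ
    (LinearEquiv.ofTop _ ?_).symm⟩
  all_goals exact LinearMap.ker_eq_top.2 (Subsingleton.elim _ _)

end HasExtLimitBaseChange

section TopDegree

open TensorProduct

variable {A L : Type*} [CommRing A] [CommRing L] [Algebra A R] [Algebra A L] [Algebra A S]
  [Algebra L S] [IsScalarTower A R S] [IsScalarTower A L S] [Algebra.IsPushout A L R S] {g : A}
  {D : Type*} [AddCommGroup D] [Module R D] {u : ℕ → D} [Module A X] [IsScalarTower A R X]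
  [Module A F] [IsScalarTower A R F]

theorem IsInverseMonomialSystem.nonempty_equiv_ker_map (hR : IsPowerRegular R xs)
    (hS : IsPowerRegular S (xs.map (algebraMap R S))) (hu : IsInverseMonomialSystem xs u)
    (hrange : FlatAway g (LinearMap.range (j.rTensor D)))
    (hcoker : FlatAway g ((F ⊗[R] D) ⧸ LinearMap.range (j.rTensor D)))
    (hg : IsUnit (algebraMap A L g)) (hi : i + 1 = xs.length) :
    Nonempty (S ⊗[R] LinearMap.ker (ExtLimit.map (powerIdeal_antitone xs) (i + 1)
        (ModuleCat.ofHom j)) ≃ₗ[S]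
      LinearMap.ker (ExtLimit.map (powerIdeal_antitone (xs.map (algebraMap R S))) (i + 1)
        (ModuleCat.ofHom (j.baseChange S)))) := by
  obtain ⟨eR, heR⟩ := exists_extLimit_equiv_tensorProduct xs.map_id hR hu hi.symm
  obtain ⟨eS, heS⟩ :=
    exists_extLimit_equiv_tensorProduct rfl hS hu ((List.length_map _).trans hi.symm)
  obtain ⟨e₁⟩ := nonempty_equiv_ker_of_apply_eq (f' := j.rTensor D) (eR (.of R X)) (eR (.of R F))
    fun z => (heR _ _ (ModuleCat.ofHom j) z).symm
  obtain ⟨e₂⟩ := nonempty_equiv_ker_baseChange (L := L) (S := S) hrange hcoker hg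
  obtain ⟨e₃⟩ := nonempty_equiv_ker_of_apply_eq (f := (j.rTensor D).baseChange S)
    (f' := AlgebraTensorModule.rTensor R D (j.baseChange S))
    (AlgebraTensorModule.assoc R R S S X D).symm (AlgebraTensorModule.assoc R R S S F D).symm
    (rTensor_baseChange_assoc_symm j)
  obtain ⟨e₄⟩ := nonempty_equiv_ker_of_apply_eq
    (f' := AlgebraTensorModule.rTensor R D (j.baseChange S)) (eS (.of S (S ⊗[R] X)))
    (eS (.of S (S ⊗[R] F))) fun z => (heS _ _ (ModuleCat.ofHom (j.baseChange S)) z).symm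
  exact ⟨AlgebraTensorModule.congr (.refl S S) e₁ ≪≫ₗ e₂ ≪≫ₗ e₃ ≪≫ₗ e₄.symm⟩

end TopDegree

end ExtLimitBaseChange

section GenericBaseChange

universe u v

variable {A : Type*} [CommRing A] {R : Type u} [CommRing R] [Algebra A R] {xs : List R}
  {M : Type u} [AddCommGroup M] [Module R M] {g : A} {i : ℕ}

variable (xs M g i) in
/-- The formation of the `i`-th local cohomology of `M`, computed along the powers of `xs`, commutes
with every base change `A → L` which inverts `g` and under which `xs` remains regular. The base
change `R → S` of `A → L` is allowed to be any pushout. -/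
def HasExtLimitBaseChangeAway : Prop :=
  ∀ (L : Type v) (S : Type u) [CommRing L] [CommRing S] [Algebra A L] [Algebra A S] [Algebra R S]
    [Algebra L S] [IsScalarTower A R S] [IsScalarTower A L S] [Algebra.IsPushout A L R S],
    IsUnit (algebraMap A L g) → IsPowerRegular S (xs.map (algebraMap R S)) →
      HasExtLimitBaseChange xs S M i

namespace HasExtLimitBaseChangeAway

theorem of_dvd {g' : A} (h : HasExtLimitBaseChangeAway.{u, v} xs M g i) (hg : g ∣ g') :
    HasExtLimitBaseChangeAway.{u, v} xs M g' i :=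
  fun L S _ _ _ _ _ _ _ _ _ hL hS =>
    h L S (isUnit_of_dvd_unit (map_dvd (algebraMap A L) hg) hL) hS

variable {X F : Type u} [AddCommGroup X] [AddCommGroup F] [Module R X] [Module R F]
  [Module A X] [Module A F] [Module A M] [IsScalarTower A R X] [IsScalarTower A R F]
  [IsScalarTower A R M] {j : X →ₗ[R] F} {q : F →ₗ[R] M}
  {D : Type*} [AddCommGroup D] [Module R D] {u : ℕ → D}

theorem of_exact [IsNoetherianRing A] [IsNoetherianRing R] [Module.Finite R M] [Module.Flat R F]
    (hR : IsPowerRegular R xs) (hu : IsInverseMonomialSystem xs u) (hj : Function.Injective j)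
    (hjq : Function.Exact j q) (hq : Function.Surjective q)
    (hM : AdicallyFlatAway g (Ideal.ofList xs) M)
    (hrange : FlatAway g (LinearMap.range (j.rTensor D)))
    (hcoker : FlatAway g ((F ⊗[R] D) ⧸ LinearMap.range (j.rTensor D)))
    (hX : i + 1 < xs.length → HasExtLimitBaseChangeAway.{u, v} xs X g (i + 1)) :
    HasExtLimitBaseChangeAway.{u, v} xs M g i := by
  intro L S _ _ _ _ _ _ _ _ _ hL hS
  rcases lt_trichotomy i xs.length with hi | hi | hi
  · refine .of_nonempty_equiv_ker hR hS hj hjq hq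
      (fixedByIdeal_ker_baseChange (L := L) hM hj hq hjq hL) hi ?_
    rcases (Nat.succ_le_of_lt hi).lt_or_eq with hi | hi
    · exact (hX hi L S hL hS).nonempty_equiv_ker_map hR hS hi
    · exact hu.nonempty_equiv_ker_map (L := L) hR hS hrange hcoker hL hi
  · exact .of_eq_length hR hS hu hi
  · exact .of_length_lt hR hS hi

end HasExtLimitBaseChangeAway

theorem exists_hasExtLimitBaseChangeAway_of_length_le [IsDomain A] [IsNoetherianRing A]
    [IsNoetherianRing R] [Module.Finite A (R ⧸ Ideal.ofList xs)] (hR : IsPowerRegular R xs)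
    {u : ℕ → ContinuousDual A (Ideal.ofList xs) R} (hu : IsInverseMonomialSystem xs u) (d : ℕ)
    (M : Type u) [AddCommGroup M] [Module R M] [Module A M] [IsScalarTower A R M]
    [Module.Finite R M] :
    ∃ g : A, g ≠ 0 ∧ ∀ i, xs.length ≤ i + d → HasExtLimitBaseChangeAway.{u, v} xs M g i := by
  induction d generalizing M with
  | zero =>
    refine ⟨1, one_ne_zero, fun i hi L S _ _ _ _ _ _ _ _ _ _ hS => ?_⟩
    exact hi.eq_or_lt.elim (fun hi => .of_eq_length hR hS hu hi.symm) (.of_length_lt hR hS)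
  | succ d ih =>
    obtain ⟨p, q, hq⟩ := Module.Finite.exists_fin' R M
    obtain ⟨g₁, hg₁, h₁⟩ := ih (LinearMap.ker q)
    obtain ⟨g₂, hg₂, h₂⟩ := exists_adicallyFlatAway (A := A) (Ideal.ofList xs) M
    obtain ⟨g₃, hg₃, hrange, hcoker⟩ := exists_flatAway_range_rTensor_continuousDual (A := A)
      (Ideal.ofList xs) (LinearMap.ker q).subtype
    refine ⟨g₁ * g₂ * g₃, mul_ne_zero (mul_ne_zero hg₁ hg₂) hg₃, fun i hi => ?_⟩
    exact .of_exact hR hu Subtype.val_injective (LinearMap.exact_subtype_ker_map q) hq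
      (h₂.of_dvd ((dvd_mul_left _ _).mul_right _)) (hrange.of_dvd (dvd_mul_left _ _))
      (hcoker.of_dvd (dvd_mul_left _ _))
      fun _ => (h₁ (i + 1) (by lia)).of_dvd ((dvd_mul_right _ _).mul_right _)

theorem exists_hasExtLimitBaseChangeAway [IsDomain A] [IsNoetherianRing A]
    [IsNoetherianRing R] [Module.Finite A (R ⧸ Ideal.ofList xs)] (hR : IsPowerRegular R xs)
    {u : ℕ → ContinuousDual A (Ideal.ofList xs) R} (hu : IsInverseMonomialSystem xs u)
    (M : Type u) [AddCommGroup M] [Module R M] [Module A M] [IsScalarTower A R M]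
    [Module.Finite R M] :
    ∃ g : A, g ≠ 0 ∧ ∀ i, HasExtLimitBaseChangeAway.{u, v} xs M g i :=
  have ⟨g, hg, h⟩ := exists_hasExtLimitBaseChangeAway_of_length_le hR hu xs.length M
  ⟨g, hg, fun i => h i (Nat.le_add_left _ _)⟩

end GenericBaseChange

section Transfer

open CategoryTheory Algebra.IsPushout

universe u

theorem HasExtLimitBaseChange.nonempty_localCohomology_equiv {R S M : Type u} [CommRing R]
    [CommRing S] [Algebra R S] [AddCommGroup M] [Module R M] {xs : List R} {i : ℕ}
    (h : HasExtLimitBaseChange xs S M i) :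
    Nonempty (S ⊗[R] (localCohomology (Ideal.ofList xs) i).obj (ModuleCat.of R M) ≃ₗ[S]
      (localCohomology ((Ideal.ofList xs).map (algebraMap R S)) i).obj
        (ModuleCat.of S (S ⊗[R] M))) := by
  rw [Ideal.map_ofList]
  obtain ⟨e⟩ := h
  exact ⟨TensorProduct.AlgebraTensorModule.congr (.refl S S)
      (localCohomologyEquivExtLimit (powerIdeal_antitone xs) (powerIdeal_le_pow xs)
        (exists_pow_le_powerIdeal xs) i _) ≪≫ₗ e ≪≫ₗ
    (localCohomologyEquivExtLimit (powerIdeal_antitone _) (powerIdeal_le_pow _)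
      (exists_pow_le_powerIdeal _) i _).symm⟩

theorem nonempty_tensorProduct_equiv_restrictScalars {A L R S X Y : Type*} [CommRing A]
    [CommRing R] [CommRing L] [CommRing S] [Algebra A R] [Algebra A L] [Algebra A S] [Algebra R S]
    [Algebra L S] [IsScalarTower A R S] [IsScalarTower A L S] [Algebra.IsPushout A L R S]
    [AddCommGroup X] [Module R X] [Module A X] [IsScalarTower A R X] [AddCommGroup Y] [Module S Y]
    (e : S ⊗[R] X ≃ₗ[S] Y) : Nonempty (L ⊗[A] X ≃ₗ[L] RestrictScalars L S Y) := by
  let e' : L ⊗[A] X ≃+ RestrictScalars L S Y :=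
    (cancelBaseChange A L R S X).symm.toAddEquiv.trans <|
      e.toAddEquiv.trans (RestrictScalars.addEquiv L S Y).symm
  refine ⟨e'.toLinearEquiv fun l z => (RestrictScalars.addEquiv L S Y).injective ?_⟩
  change e ((cancelBaseChange A L R S X).symm (l • z)) =
    algebraMap L S l • e ((cancelBaseChange A L R S X).symm z)
  rw [map_smul, ← algebraMap_smul S l, map_smul]

theorem nonempty_tensorProduct_restrictScalars_equiv {A L R S X Y : Type*} [CommRing A]
    [CommRing R] [CommRing L] [CommRing S] [Algebra A R] [Algebra A L] [Algebra A S] [Algebra R S]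
    [Algebra L S] [IsScalarTower A R S] [IsScalarTower A L S] [Algebra.IsPushout A L R S]
    [AddCommGroup X] [Module R X] [AddCommGroup Y] [Module S Y] (e : S ⊗[R] X ≃ₗ[S] Y) :
    Nonempty (L ⊗[A] RestrictScalars A R X ≃ₗ[L] RestrictScalars L S Y) :=
  @nonempty_tensorProduct_equiv_restrictScalars A L R S (RestrictScalars A R X) Y _ _ _ _ _ _ _ _ _
    _ _ _ _ (RestrictScalars.moduleOrig A R X) (RestrictScalars.module A R X)
    (RestrictScalars.isScalarTower A R X) _ _ e

theorem exists_hasExtLimitBaseChange_variableList {A : Type u} [CommRing A] [IsDomain A]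
    [IsNoetherianRing A] {σ : Type u} [Fintype σ] (M : Type u) [AddCommGroup M]
    [Module (MvPowerSeries σ A) M] [Module.Finite (MvPowerSeries σ A) M] :
    ∃ g : A, g ≠ 0 ∧ ∀ (L : Type u) [CommRing L] [Algebra A L], IsUnit (algebraMap A L g) → ∀ i,
      HasExtLimitBaseChange (variableList σ A) (MvPowerSeries σ A ⊗[A] L) M i := by
  let : Module A M := Module.compHom M (algebraMap A (MvPowerSeries σ A))
  have : IsScalarTower A (MvPowerSeries σ A) M := .of_algebraMap_smul fun _ _ => rfl
  have := finite_quotient_ofList_variableList (σ := σ) (A := A)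
  obtain ⟨g, hg, h⟩ := exists_hasExtLimitBaseChangeAway.{u, u} (xs := variableList σ A)
    (isPowerRegular_map_X (Finset.nodup_toList (Finset.univ : Finset σ)))
    (isInverseMonomialSystem_inverseMonomial (σ := σ) (A := A)) M
  exact ⟨g, hg, fun L _ _ hL i => h i L _ hL
    (isPowerRegular_tensorProduct_map_X L (Finset.nodup_toList _))⟩

end Transfer

/-- **Base change of local cohomology over a power series ring.**  Let `A` be a Noetherian
domain, `R = A[[x₁,…,xₙ]]`, `I = (x₁,…,xₙ)` and `M` a finitely generated `R`-module.  There is a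
nonzero `g ∈ A` such that for every commutative `A`-algebra `L` whose structure map factors
through `A_g` (equivalently, in which `g` becomes a unit) and every `i ≥ 0`, the base-change map
is an isomorphism `Hⁱ_I(M) ⊗[A] L ≅ Hⁱ_{I·(R ⊗[A] L)}(M ⊗[A] L)` of `L`-modules. -/
theorem stmt1 (A : Type) [CommRing A] [IsDomain A] [IsNoetherianRing A] (n : ℕ)
    (M : Type) [AddCommGroup M] [Module (MvPowerSeries (Fin n) A) M]
    [Module.Finite (MvPowerSeries (Fin n) A) M]
    (I : Ideal (MvPowerSeries (Fin n) A))
    (hI : I = Ideal.span (Set.range (MvPowerSeries.X : Fin n → MvPowerSeries (Fin n) A))) :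
    ∃ g : A, g ≠ 0 ∧
      ∀ (L : Type) [CommRing L] [Algebra A L], IsUnit (algebraMap A L g) →
        ∀ i : ℕ,
          Nonempty
            ((TensorProduct A L
                (RestrictScalars A (MvPowerSeries (Fin n) A)
                  ((localCohomology I i).obj (ModuleCat.of (MvPowerSeries (Fin n) A) M)))) ≃ₗ[L]
              RestrictScalars L (MvPowerSeries (Fin n) A ⊗[A] L)
                ((localCohomology
                    (Ideal.map
                      (algebraMap (MvPowerSeries (Fin n) A) (MvPowerSeries (Fin n) A ⊗[A] L)) I)
                    i).obj
                  (ModuleCat.of (MvPowerSeries (Fin n) A ⊗[A] L)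
                    ((MvPowerSeries (Fin n) A ⊗[A] L) ⊗[MvPowerSeries (Fin n) A] M)))) := by
  obtain rfl : I = Ideal.ofList (variableList (Fin n) A) := hI.trans ofList_variableList.symm
  obtain ⟨g, hg, h⟩ := exists_hasExtLimitBaseChange_variableList (σ := Fin n) (A := A) M
  refine ⟨g, hg, fun L _ _ hL i => ?_⟩
  obtain ⟨e⟩ := (h L hL i).nonempty_localCohomology_equiv
  exact nonempty_tensorProduct_restrictScalars_equiv e
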